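/- arXiv:1509.05724 — 3 statements merged into one kernel-verified Lean document; each statement's English description precedes it below -/
import Mathlib

section
/- Let n ≥ 3, let s > 2 and t > 2, and let μ, ν be nonzero finite Borel measures on ℝⁿ with compact support such that I_s(μ) < ∞ and I_t(ν) < ∞. Then the set of unit vectors e ∈ S^{n−1} for which the set π_e(spt μ) ∩ π_e(spt ν) ⊆ ℝ has non-empty interior has positive (n−1)-dimensional Hausdorff measure in S^{n−1}. -/
open MeasureTheory Metric Set
open scoped ENNReal RealInnerProductSpace

/-- The topological support of a measure: points all of whose neighbourhoods
have positive measure. -/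
def sptm (n : ℕ) (μ : MeasureTheory.Measure (EuclideanSpace ℝ (Fin n))) :
    Set (EuclideanSpace ℝ (Fin n)) :=
  {x | ∀ r > 0, 0 < μ (Metric.ball x r)}

/-- The `s`-energy `I_s(μ) = ∬ |x-y|^{-s} dμ(x) dμ(y)` of a measure. -/
noncomputable def energyI (n : ℕ) (s : ℝ)
    (μ : MeasureTheory.Measure (EuclideanSpace ℝ (Fin n))) : ℝ≥0∞ :=
  ∫⁻ x, ∫⁻ y, (‖x - y‖₊ : ℝ≥0∞) ^ (-s) ∂μ ∂μ

/-
Average over Gaussian random directions `e`. Finiteness of `I_s(μ)` for some `s > 2` makes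
`t ↦ μ^(t e)` integrable for almost every `e`, so that the projection of `μ` along `e` has a
continuous density, which vanishes off the projection of the support; similarly for `ν`. By
Parseval the correlation of the two projected densities is `∫ μ^(t e) ν^(-t e) dt`, up to a
constant, and its average over `e` is the integral of the Gaussian kernel
`exp (-‖t (x - y)‖ ^ 2 / 2)` over `t`, `μ` and `ν`, which is positive. Hence for a set of `e` of
positive Lebesgue measure the densities are both nonzero on a common open set. Whether this happens
depends only on the line spanned by `e`, and the lines spanned by an `H^{n-1}`-null set of unit
vectors fill only a Lebesgue-null cone.
-/

open Module ProbabilityTheory Filter Topology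
open scoped FourierTransform Pointwise NNReal

section HausdorffMeasure

lemma hausdorffMeasure_image_eq_zero_of_locally_lipschitzOn {X Y : Type*} [EMetricSpace X]
    [SecondCountableTopology X] [MeasurableSpace X] [BorelSpace X] [EMetricSpace Y]
    [MeasurableSpace Y] [BorelSpace Y] {f : X → Y} {A : Set X} {d : ℝ} (hd : 0 ≤ d)
    (hA : μH[d] A = 0) (hf : ∀ x ∈ A, ∃ K : ℝ≥0, ∃ U ∈ 𝓝[A] x, LipschitzOnWith K f U) :
    μH[d] (f '' A) = 0 := by
  choose! K U hU hKU using hf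
  obtain ⟨T, hTA, hTc, hcover⟩ := TopologicalSpace.countable_cover_nhdsWithin hU
  have himage : f '' A ⊆ ⋃ x ∈ T, f '' (U x ∩ A) := by
    rintro _ ⟨y, hy, rfl⟩
    obtain ⟨x, hx, hyx⟩ := mem_iUnion₂.1 (hcover hy)
    exact mem_iUnion₂.2 ⟨x, hx, mem_image_of_mem f ⟨hyx, hy⟩⟩
  refine measure_mono_null himage ((measure_biUnion_null_iff hTc).2 fun x hx ↦ ?_)
  have hle := ((hKU x (hTA hx)).mono inter_subset_left).hausdorffMeasure_image_le
    (s := U x ∩ A) hd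
  rwa [measure_mono_null inter_subset_right hA, mul_zero, nonpos_iff_eq_zero] at hle

variable {E : Type*} [NormedAddCommGroup E] [NormedSpace ℝ E]

/-- The central projection `a ↦ P a / ℓ a` from the origin onto the affine hyperplane `ℓ = 1`,
identified with a vector space `W` by means of a linear map `P`. -/
noncomputable def centralProjection {W : Type*} [NormedAddCommGroup W] [NormedSpace ℝ W]
    (ℓ : E →L[ℝ] ℝ) (P : E →L[ℝ] W) (a : E) : W :=
  (ℓ a)⁻¹ • P a

/- Away from the hyperplane `ℓ = 0`, the cone over `A` consists of multiples of points of its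
central projection. The cylinder over this projection in the direction `u` is an intermediate step,
since it is mapped to the cone by a differentiable map of `E` to itself. -/
lemma univ_smul_subset_ker_union_image (ℓ : E →L[ℝ] ℝ) {u : E} (hu : ℓ u = 1)
    {P : E →L[ℝ] ℓ.ker} (hP : ∀ v, (P v : E) = v - ℓ v • u) (A : Set E) :
    (univ : Set ℝ) • A ⊆ ℓ.ker ∪ (fun v ↦ ℓ v • (u + (v - ℓ v • u))) ''
      (P ⁻¹' (centralProjection ℓ P '' (A ∩ {a | ℓ a ≠ 0}))) := by
  rintro _ ⟨r, -, a, ha, rfl⟩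
  by_cases hra : ℓ (r • a) = 0
  · exact Or.inl hra
  have hℓa : ℓ a ≠ 0 := fun h ↦ hra (by simp [h])
  set w := centralProjection ℓ P a with hw
  have hℓw : ℓ w = 0 := w.2
  have huw : u + w = (ℓ a)⁻¹ • a := by
    simp [hw, centralProjection, hP, smul_sub, smul_smul, inv_mul_cancel₀ hℓa]
  set v : E := ℓ (r • a) • u + w with hv
  have hℓv : ℓ v = ℓ (r • a) := by simp [hv, hu, hℓw]
  have hPv : P v = w := Subtype.ext (by rw [hP, hℓv, hv, add_sub_cancel_left])
  refine Or.inr ⟨v, ⟨a, ⟨ha, hℓa⟩, hPv.symm⟩, ?_⟩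
  calc ℓ v • (u + (v - ℓ v • u)) = ℓ (r • a) • (ℓ a)⁻¹ • a := by
        rw [hℓv, hv, add_sub_cancel_left, huw]
    _ = r • a := by rw [map_smul, smul_eq_mul, smul_smul, mul_inv_cancel_right₀ hℓa]

variable [FiniteDimensional ℝ E] [MeasurableSpace E] [BorelSpace E]

lemma hausdorffMeasure_centralProjection_image_eq_zero {W : Type*} [NormedAddCommGroup W]
    [NormedSpace ℝ W] [MeasurableSpace W] [BorelSpace W] (ℓ : E →L[ℝ] ℝ) (P : E →L[ℝ] W)
    {A : Set E} {d : ℝ} (hd : 0 ≤ d) (hA : μH[d] A = 0) :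
    μH[d] (centralProjection ℓ P '' (A ∩ {a | ℓ a ≠ 0})) = 0 := by
  refine hausdorffMeasure_image_eq_zero_of_locally_lipschitzOn hd
    (measure_mono_null inter_subset_left hA) fun a ha ↦ ?_
  have hsmooth : ContDiffAt ℝ 1 (centralProjection ℓ P) a :=
    (ℓ.contDiff.contDiffAt.inv ha.2).smul P.contDiff.contDiffAt
  obtain ⟨K, U, hU, hKU⟩ := hsmooth.exists_lipschitzOnWith
  exact ⟨K, U, mem_nhdsWithin_of_mem_nhds hU, hKU⟩

lemma addHaar_preimage_linearMap_eq_zero {W : Type*} [NormedAddCommGroup W] [NormedSpace ℝ W]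
    [MeasurableSpace W] [BorelSpace W] (μ : Measure E) [μ.IsAddHaarMeasure] (ν : Measure W)
    [ν.IsAddHaarMeasure] {P : E →ₗ[ℝ] W} (hP : Function.Surjective P) {G : Set W} (hG : ν G = 0) :
    μ (P ⁻¹' G) = 0 := by
  have hae : ∀ᵐ w ∂ν, w ∈ (toMeasurable ν G)ᶜ :=
    measure_eq_zero_iff_ae_notMem.1 ((measure_toMeasurable G).trans hG)
  have hpre := (ae_comp_linearMap_mem_iff P μ ν hP (measurableSet_toMeasurable ν G).compl).2 hae
  exact measure_mono_null (preimage_mono (subset_toMeasurable ν G))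
    (measure_eq_zero_iff_ae_notMem.2 hpre)

lemma addHaar_univ_smul_eq_zero_of_hausdorffMeasure_eq_zero [Nontrivial E] (μ : Measure E)
    [μ.IsAddHaarMeasure] {A : Set E} (hA : μH[(finrank ℝ E : ℝ) - 1] A = 0) :
    μ ((univ : Set ℝ) • A) = 0 := by
  obtain ⟨u, hu0⟩ := exists_ne (0 : E)
  obtain ⟨ℓ, hu⟩ := SeparatingDual.exists_eq_one (R := ℝ) hu0
  have hright : Function.RightInverse (ContinuousLinearMap.toSpanSingleton ℝ u) ℓ := fun c ↦ by
    simp [hu]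
  let P := ℓ.projKerOfRightInverse (ContinuousLinearMap.toSpanSingleton ℝ u) hright
  have hP : Function.Surjective P := fun w ↦ ⟨w, ℓ.projKerOfRightInverse_apply_idem _ hright w⟩
  have hℓ : (ℓ : E →ₗ[ℝ] ℝ) ≠ 0 := fun h ↦ one_ne_zero (hu ▸ LinearMap.congr_fun h u)
  have hdim : (finrank ℝ E : ℝ) - 1 = finrank ℝ ℓ.ker := by
    rw [← Module.Dual.finrank_ker_add_one_of_ne_zero hℓ, Nat.cast_add_one, add_sub_cancel_right]
  have hprojection : μH[finrank ℝ ℓ.ker] (centralProjection ℓ P '' (A ∩ {a | ℓ a ≠ 0})) = 0 :=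
    hausdorffMeasure_centralProjection_image_eq_zero ℓ P (Nat.cast_nonneg _) (hdim ▸ hA)
  have hcylinder := addHaar_preimage_linearMap_eq_zero μ μH[finrank ℝ ℓ.ker]
    (P := (P : E →ₗ[ℝ] ℓ.ker)) hP hprojection
  have hhyperplane : μ (ℓ.ker : Set E) = 0 :=
    Measure.addHaar_submodule μ _ fun h ↦ hℓ (LinearMap.ker_eq_top.1 h)
  exact measure_mono_null (univ_smul_subset_ker_union_image ℓ hu (fun _ ↦ rfl) A)
    (measure_union_null hhyperplane (addHaar_image_eq_zero_of_differentiableOn_of_addHaar_eq_zero μ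
      (by fun_prop) hcylinder))

end HausdorffMeasure

section FourierInversion

variable {E : Type*} [NormedAddCommGroup E] [InnerProductSpace ℝ E] [MeasurableSpace E]
  [BorelSpace E]

lemma integral_mul_charFun_smul [SecondCountableTopology E] (κ τ : Measure E) [SFinite κ]
    [IsFiniteMeasure τ] {φ : E → ℂ} (hφ : Integrable φ κ) (c : ℝ) :
    ∫ ξ, φ ξ * charFun τ (c • ξ) ∂κ =
      ∫ x, ∫ ξ, Complex.exp ((c * ⟪x, ξ⟫ : ℝ) * Complex.I) * φ ξ ∂κ ∂τ := by
  have hint : Integrable (fun p : E × E ↦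
      Complex.exp ((c * ⟪p.2, p.1⟫ : ℝ) * Complex.I) * φ p.1) (κ.prod τ) :=
    (hφ.comp_fst τ).bdd_mul (c := 1) (Continuous.aestronglyMeasurable (by fun_prop))
      (.of_forall fun p ↦ (Complex.norm_exp_ofReal_mul_I _).le)
  rw [← integral_integral_swap hint]
  refine integral_congr_ae (.of_forall fun ξ ↦ ?_)
  simp only [charFun_apply, inner_smul_right]
  rw [mul_comm, ← integral_mul_const]

variable [FiniteDimensional ℝ E]

/-- The density of `τ` recovered from its characteristic function by Fourier inversion. As
`charFun τ (2π ξ) = ∫ exp (2π i ⟪x, ξ⟫) ∂τ` is the *inverse* Fourier transform of `τ` in the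
normalisation of `𝓕`, it is `𝓕`, not `𝓕⁻`, that inverts it. -/
noncomputable def fourierDensity (τ : Measure E) : E → ℂ :=
  𝓕 fun ξ ↦ charFun τ ((2 * Real.pi) • ξ)

variable {τ : Measure E}

lemma continuous_fourierDensity (hτ : Integrable (charFun τ)) : Continuous (fourierDensity τ) :=
  VectorFourier.fourierIntegral_continuous Real.continuous_fourierChar (L := innerₗ E)
    continuous_inner (hτ.comp_smul (by positivity))

lemma integral_fourierDensity (hτ : Integrable (charFun τ)) (ρ : Measure E) [IsFiniteMeasure ρ] :
    ∫ u, fourierDensity τ u ∂ρ =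
      |((2 * Real.pi) ^ finrank ℝ E)⁻¹| • ∫ ξ, charFun τ ξ * charFun ρ (-ξ) := by
  have hfubini := integral_mul_charFun_smul volume ρ
    (hτ.comp_smul (R := 2 * Real.pi) (by positivity)) (-(2 * Real.pi))
  rw [← Measure.integral_comp_smul volume (fun ξ ↦ charFun τ ξ * charFun ρ (-ξ))]
  simp only [neg_smul] at hfubini
  rw [hfubini]
  refine integral_congr_ae (.of_forall fun u ↦ ?_)
  simp only [fourierDensity]
  rw [Real.fourier_eq']
  simp [mul_comm, mul_left_comm, real_inner_comm]

variable [IsFiniteMeasure τ]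

lemma integral_schwartzMap_mul_fourierDensity (hτ : Integrable (charFun τ))
    (ψ : SchwartzMap E ℂ) : ∫ u, ψ u * fourierDensity τ u = ∫ u, ψ u ∂τ := by
  have hτ' := hτ.comp_smul (R := 2 * Real.pi) (by positivity)
  have hadjoint : ∫ ξ, 𝓕 (ψ : E → ℂ) ξ * charFun τ ((2 * Real.pi) • ξ) =
      ∫ u, ψ u * fourierDensity τ u := by
    simpa using! VectorFourier.integral_fourierIntegral_smul_eq_flip (L := innerₗ E)
      Real.continuous_fourierChar continuous_inner ψ.integrable hτ'
  have hinv (x : E) : 𝓕⁻ (𝓕 (ψ : E → ℂ)) x = ψ x := by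
    rw [← SchwartzMap.fourier_coe, ← SchwartzMap.fourierInv_coe,
      FourierTransform.fourierInv_fourier_eq]
  have hψ : Integrable (𝓕 (ψ : E → ℂ)) := by
    rw [← SchwartzMap.fourier_coe]
    exact (𝓕 ψ).integrable
  rw [← hadjoint, integral_mul_charFun_smul volume τ hψ]
  refine integral_congr_ae (.of_forall fun x ↦ ?_)
  simp only
  rw [← hinv x, Real.fourierInv_eq']
  simp [real_inner_comm, mul_comm]

lemma integral_smul_fourierDensity (hτ : Integrable (charFun τ)) {g : E → ℝ}
    (hg : ContDiff ℝ (⊤ : ℕ∞) g) (hgc : HasCompactSupport g) :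
    ∫ u, g u • fourierDensity τ u = ((∫ u, g u ∂τ : ℝ) : ℂ) := by
  have hgc' : HasCompactSupport fun u ↦ (g u : ℂ) := hgc.comp_left (g := Complex.ofReal) rfl
  have htest := integral_schwartzMap_mul_fourierDensity hτ
    (hgc'.toSchwartzMap (Complex.ofRealCLM.contDiff.comp hg))
  simp only [Complex.real_smul, ← integral_complex_ofReal]
  exact htest

lemma fourierDensity_eq_zero_of_notMem_support (hτ : Integrable (charFun τ)) {u : E}
    (hu : u ∉ τ.support) : fourierDensity τ u = 0 := by
  have hU : IsOpen τ.supportᶜ := Measure.isOpen_compl_support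
  have hcont := continuous_fourierDensity hτ
  have hae := hU.ae_eq_zero_of_integral_contDiff_smul_eq_zero (μ := volume)
    (hcont.locallyIntegrable.locallyIntegrableOn _) fun g hg hgc hgU ↦ by
      rw [integral_smul_fourierDensity hτ hg hgc, integral_eq_zero_of_ae, Complex.ofReal_zero]
      filter_upwards [Measure.support_mem_ae] with x hx
      exact image_eq_zero_of_notMem_tsupport fun h ↦ hgU h hx
  exact Measure.eqOn_open_of_ae_eq (g := fun _ ↦ 0)
    ((ae_restrict_iff' hU.measurableSet).2 hae) hU hcont.continuousOn continuousOn_const hu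

lemma measure_eq_zero_of_fourierDensity_eq_zero (hτ : Integrable (charFun τ)) {U : Set E}
    (hU : IsOpen U) (h0 : ∀ u ∈ U, fourierDensity τ u = 0) : τ U = 0 := by
  refine measure_null_of_locally_null U fun x hx ↦ ?_
  obtain ⟨g, hgU, hgc, hg, hg01, hgx⟩ := exists_contDiff_tsupport_subset (n := ⊤) (hU.mem_nhds hx)
  have hzero (u : E) : g u • fourierDensity τ u = 0 := by
    by_cases hu : u ∈ U
    · rw [h0 u hu, smul_zero]
    · rw [image_eq_zero_of_notMem_tsupport fun h ↦ hu (hgU h), zero_smul]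
  have hgτ : ∫ u, g u ∂τ = 0 := by
    simpa only [hzero, integral_zero, eq_comm, Complex.ofReal_eq_zero] using
      integral_smul_fourierDensity hτ hg hgc
  rw [integral_eq_zero_iff_of_nonneg (fun u ↦ (hg01 (mem_range_self u)).1)
    (hg.continuous.integrable_of_hasCompactSupport hgc)] at hgτ
  refine ⟨{u | g u ≠ 0}, mem_nhdsWithin_of_mem_nhds ?_, hgτ⟩
  exact (isOpen_ne_fun hg.continuous continuous_const).mem_nhds (by simp [hgx])

theorem interior_support_inter_support_nonempty {ρ : Measure E} [IsFiniteMeasure ρ]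
    (hρ : Integrable (charFun ρ)) (hτ : Integrable (charFun τ))
    (h : ∫ ξ, charFun ρ ξ * charFun τ (-ξ) ≠ 0) :
    (interior (ρ.support ∩ τ.support)).Nonempty := by
  have hρU : IsOpen {u | fourierDensity ρ u ≠ 0} :=
    isOpen_ne_fun (continuous_fourierDensity hρ) continuous_const
  have hτU : IsOpen {u | fourierDensity τ u ≠ 0} :=
    isOpen_ne_fun (continuous_fourierDensity hτ) continuous_const
  have hcorr : ∫ u, fourierDensity ρ u ∂τ ≠ 0 := by
    rw [integral_fourierDensity hρ]
    exact smul_ne_zero (by positivity) h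
  obtain ⟨u, hρu, hτu⟩ : ∃ u, fourierDensity ρ u ≠ 0 ∧ fourierDensity τ u ≠ 0 := by
    by_contra! hdisjoint
    exact hcorr (integral_eq_zero_of_ae
      (measure_eq_zero_of_fourierDensity_eq_zero hτ hρU hdisjoint))
  refine ⟨u, mem_interior.2 ⟨_, fun v hv ↦ ⟨?_, ?_⟩, hρU.inter hτU, hρu, hτu⟩⟩
  · exact not_imp_comm.1 (fourierDensity_eq_zero_of_notMem_support hρ) hv.1
  · exact not_imp_comm.1 (fourierDensity_eq_zero_of_notMem_support hτ) hv.2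

end FourierInversion

section StdGaussian

variable {E : Type*} [NormedAddCommGroup E] [InnerProductSpace ℝ E] [FiniteDimensional ℝ E]
  [MeasurableSpace E] [BorelSpace E]

lemma charFun_withDensity_exp_neg_norm_sq (t : E) :
    charFun (volume.withDensity fun v : E ↦ ENNReal.ofReal (Real.exp (-‖v‖ ^ 2 / 2))) t =
      ((2 * Real.pi) ^ (finrank ℝ E / 2 : ℝ) : ℝ) * Complex.exp (-‖t‖ ^ 2 / 2) := by
  have hgauss := GaussianFourier.integral_cexp_neg_mul_sq_norm_add (b := 1 / 2) (by norm_num)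
    Complex.I t
  rw [charFun_apply, integral_withDensity_eq_integral_toReal_smul (by fun_prop) (by simp)]
  convert hgauss using 1
  · refine integral_congr_ae (.of_forall fun v ↦ ?_)
    simp only
    rw [ENNReal.toReal_ofReal (Real.exp_pos _).le, Complex.real_smul, Complex.ofReal_exp,
      ← Complex.exp_add, real_inner_comm]
    congr 1
    push_cast
    ring
  · rw [Complex.ofReal_cpow (by positivity), Complex.I_sq]
    push_cast
    congr 2 <;> ring

lemma stdGaussian_absolutelyContinuous_volume : stdGaussian E ≪ (volume : Measure E) := by
  set γ : Measure E := volume.withDensity fun v ↦ ENNReal.ofReal (Real.exp (-‖v‖ ^ 2 / 2))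
  set c : ℝ≥0 := (2 * NNReal.pi) ^ (finrank ℝ E / 2 : ℝ)
  have hint : Integrable fun v : E ↦ Real.exp (-‖v‖ ^ 2 / 2) := by
    refine Integrable.of_integral_ne_zero ?_
    have hgauss := GaussianFourier.integral_rexp_neg_mul_sq_norm (V := E) one_half_pos
    simp only [neg_mul, one_div, inv_mul_eq_div, ← neg_div] at hgauss
    rw [hgauss]
    positivity
  have : IsFiniteMeasure γ := isFiniteMeasure_withDensity_ofReal hint.2
  have hγ : γ = c • stdGaussian E := by
    refine Measure.ext_of_charFun (funext fun t ↦ ?_)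
    rw [charFun_withDensity_exp_neg_norm_sq, charFun_apply, integral_smul_nnreal_measure,
      ← charFun_apply, charFun_stdGaussian, NNReal.smul_def, Complex.real_smul]
    simp [c]
  have hc : (c : ℝ≥0∞) ≠ 0 :=
    ENNReal.coe_ne_zero.2 (NNReal.rpow_pos (mul_pos two_pos NNReal.pi_pos)).ne'
  have hle : stdGaussian E ≪ γ := hγ ▸ Measure.AbsolutelyContinuous.rfl.smul_right hc
  exact hle.trans (withDensity_absolutelyContinuous _ _)

lemma integral_charFun_smul_comm (κ τ : Measure E) [IsFiniteMeasure κ] [IsFiniteMeasure τ]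
    (c : ℝ) : ∫ ξ, charFun τ (c • ξ) ∂κ = ∫ x, charFun κ (c • x) ∂τ := by
  have hfubini := integral_mul_charFun_smul κ τ (integrable_const 1) c
  simp only [one_mul, mul_one] at hfubini
  rw [hfubini]
  refine integral_congr_ae (.of_forall fun x ↦ ?_)
  simp [charFun_apply, inner_smul_right, real_inner_comm]

lemma charFun_map_prod_sub (μ ν : Measure E) [IsFiniteMeasure μ] [IsFiniteMeasure ν] (t : E) :
    charFun ((μ.prod ν).map fun p ↦ p.1 - p.2) t = charFun μ t * charFun ν (-t) := by
  rw [charFun_apply, integral_map (by fun_prop) (by fun_prop), charFun_apply, charFun_apply,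
    ← integral_prod_mul]
  refine integral_congr_ae (.of_forall fun p ↦ ?_)
  simp only [← Complex.exp_add, inner_sub_left, inner_neg_right]
  congr 1
  push_cast
  ring

lemma integral_charFun_mul_charFun_neg_stdGaussian (μ ν : Measure E) [IsFiniteMeasure μ]
    [IsFiniteMeasure ν] (t : ℝ) :
    ∫ e, charFun μ (t • e) * charFun ν (-(t • e)) ∂stdGaussian E =
      (∫ p, Real.exp (-‖t • (p.1 - p.2)‖ ^ 2 / 2) ∂μ.prod ν : ℝ) := by
  simp_rw [← charFun_map_prod_sub]
  rw [integral_charFun_smul_comm, integral_map (by fun_prop) (by fun_prop),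
    ← integral_complex_ofReal]
  simp [charFun_stdGaussian]

lemma integrable_exp_neg_norm_smul_sub_sq (μ ν : Measure E) [IsFiniteMeasure μ]
    [IsFiniteMeasure ν] (t : ℝ) :
    Integrable (fun p : E × E ↦ Real.exp (-‖t • (p.1 - p.2)‖ ^ 2 / 2)) (μ.prod ν) := by
  refine Integrable.of_bound (C := 1) (by fun_prop) (.of_forall fun p ↦ ?_)
  rw [Real.norm_of_nonneg (by positivity), Real.exp_le_one_iff]
  linarith [sq_nonneg ‖t • (p.1 - p.2)‖]

lemma lintegral_enorm_charFun_sq_stdGaussian (μ : Measure E) [IsFiniteMeasure μ] (t : ℝ) :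
    ∫⁻ e, ‖charFun μ (t • e)‖ₑ ^ 2 ∂stdGaussian E =
      ∫⁻ p, ENNReal.ofReal (Real.exp (-‖t • (p.1 - p.2)‖ ^ 2 / 2)) ∂μ.prod μ := by
  have hint : Integrable (fun e ↦ ‖charFun μ (t • e)‖ ^ 2) (stdGaussian E) := by
    refine Integrable.of_bound (C := μ.real univ ^ 2) (by fun_prop) (.of_forall fun e ↦ ?_)
    rw [norm_pow, norm_norm]
    gcongr
    exact norm_charFun_le _
  have hparseval : ∫ e, ‖charFun μ (t • e)‖ ^ 2 ∂stdGaussian E =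
      ∫ p, Real.exp (-‖t • (p.1 - p.2)‖ ^ 2 / 2) ∂μ.prod μ := by
    rw [← Complex.ofReal_inj, ← integral_charFun_mul_charFun_neg_stdGaussian,
      ← integral_complex_ofReal]
    simp [Complex.mul_conj']
  rw [← ofReal_integral_eq_lintegral_ofReal (integrable_exp_neg_norm_smul_sub_sq μ μ t)
    (.of_forall fun _ ↦ by positivity), ← hparseval,
    ofReal_integral_eq_lintegral_ofReal hint (.of_forall fun _ ↦ by positivity)]
  simp [ENNReal.ofReal_pow]

end StdGaussian

section RieszEnergy

/-- The energy `∬ ‖x - y‖ ^ (-s) ∂μ ∂μ` of `μ` for the Riesz kernel of order `s`. For `s > 0` the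
kernel is infinite on the diagonal. -/
noncomputable def rieszEnergy {E : Type*} [NormedAddCommGroup E] [MeasurableSpace E] (s : ℝ)
    (μ : Measure E) : ℝ≥0∞ :=
  ∫⁻ x, ∫⁻ y, ‖x - y‖ₑ ^ (-s) ∂μ ∂μ

lemma integral_abs_rpow_mul_exp_neg_mul_sq {s a : ℝ} (hs : 0 < s) (ha : 0 < a) :
    ∫ t : ℝ, |t| ^ (s - 1) * Real.exp (-(|t| * a) ^ 2 / 2) =
      2 ^ (s / 2) * Real.Gamma (s / 2) * a ^ (-s) := by
  have hscale : (a ^ 2 / 2) ^ (-s / 2) = 2 ^ (s / 2) * a ^ (-s) := by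
    rw [Real.div_rpow (by positivity) two_pos.le, ← Real.rpow_natCast_mul ha.le, neg_div,
      Real.rpow_neg two_pos.le, div_inv_eq_mul, mul_comm]
    congr 2
    push_cast
    ring
  calc ∫ t : ℝ, |t| ^ (s - 1) * Real.exp (-(|t| * a) ^ 2 / 2)
      = 2 * ∫ t in Ioi (0 : ℝ), t ^ (s - 1) * Real.exp (-(t * a) ^ 2 / 2) :=
        integral_comp_abs (f := fun t ↦ t ^ (s - 1) * Real.exp (-(t * a) ^ 2 / 2))
    _ = 2 * ∫ t in Ioi (0 : ℝ), t ^ (s - 1) * Real.exp (-(a ^ 2 / 2) * t ^ (2 : ℝ)) := by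
        refine congrArg (2 * ·) (integral_congr_ae (.of_forall fun t ↦ ?_))
        simp only [Real.rpow_two]
        ring_nf
    _ = 2 ^ (s / 2) * Real.Gamma (s / 2) * a ^ (-s) := by
        rw [integral_rpow_mul_exp_neg_mul_rpow two_pos (by linarith) (by positivity),
          sub_add_cancel, hscale]
        ring

lemma lintegral_abs_rpow_mul_exp_neg_norm_smul_sq_le {E : Type*} [NormedAddCommGroup E]
    [NormedSpace ℝ E] {s : ℝ} (hs : 0 < s) (z : E) :
    ∫⁻ t : ℝ, ENNReal.ofReal (|t| ^ (s - 1)) * ENNReal.ofReal (Real.exp (-‖t • z‖ ^ 2 / 2)) ≤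
      ENNReal.ofReal (2 ^ (s / 2) * Real.Gamma (s / 2)) * ‖z‖ₑ ^ (-s) := by
  have hΓ : 0 < 2 ^ (s / 2) * Real.Gamma (s / 2) :=
    mul_pos (by positivity) (Real.Gamma_pos_of_pos (half_pos hs))
  rcases eq_or_ne z 0 with rfl | hz
  · rw [enorm_zero, ENNReal.zero_rpow_of_neg (neg_lt_zero.2 hs),
      ENNReal.mul_top (ENNReal.ofReal_pos.2 hΓ).ne']
    exact le_top
  have hz' : 0 < ‖z‖ := norm_pos_iff.2 hz
  have hint : Integrable fun t : ℝ ↦ |t| ^ (s - 1) * Real.exp (-(|t| * ‖z‖) ^ 2 / 2) :=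
    Integrable.of_integral_ne_zero <| by
      rw [integral_abs_rpow_mul_exp_neg_mul_sq hs hz']
      positivity
  simp_rw [← ENNReal.ofReal_mul (Real.rpow_nonneg (abs_nonneg _) (s - 1)), norm_smul,
    Real.norm_eq_abs]
  rw [← ofReal_integral_eq_lintegral_ofReal hint (.of_forall fun _ ↦ by positivity),
    integral_abs_rpow_mul_exp_neg_mul_sq hs hz', ENNReal.ofReal_mul hΓ.le,
    ← ENNReal.ofReal_rpow_of_pos hz', ofReal_norm]

variable {E : Type*} [NormedAddCommGroup E] [InnerProductSpace ℝ E] [FiniteDimensional ℝ E]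
  [MeasurableSpace E] [BorelSpace E]

lemma lintegral_abs_rpow_mul_enorm_charFun_sq_le (μ : Measure E) [IsFiniteMeasure μ] {s : ℝ}
    (hs : 0 < s) :
    ∫⁻ p : E × ℝ, ENNReal.ofReal (|p.2| ^ (s - 1)) * ‖charFun μ (p.2 • p.1)‖ₑ ^ 2
        ∂(stdGaussian E).prod volume ≤
      ENNReal.ofReal (2 ^ (s / 2) * Real.Gamma (s / 2)) * rieszEnergy s μ := by
  have : Measurable (charFun μ) := measurable_charFun
  calc ∫⁻ p : E × ℝ, ENNReal.ofReal (|p.2| ^ (s - 1)) * ‖charFun μ (p.2 • p.1)‖ₑ ^ 2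
        ∂(stdGaussian E).prod volume
      = ∫⁻ t : ℝ, ∫⁻ p, ENNReal.ofReal (|t| ^ (s - 1)) *
          ENNReal.ofReal (Real.exp (-‖t • (p.1 - p.2)‖ ^ 2 / 2)) ∂μ.prod μ := by
        rw [lintegral_prod_symm _ (by fun_prop)]
        refine lintegral_congr fun t ↦ ?_
        dsimp only
        rw [lintegral_const_mul _ (by fun_prop), lintegral_const_mul _ (by fun_prop),
          lintegral_enorm_charFun_sq_stdGaussian]
    _ = ∫⁻ p, ∫⁻ t : ℝ, ENNReal.ofReal (|t| ^ (s - 1)) *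
          ENNReal.ofReal (Real.exp (-‖t • (p.1 - p.2)‖ ^ 2 / 2)) ∂volume ∂μ.prod μ :=
        lintegral_lintegral_swap (by fun_prop)
    _ ≤ ∫⁻ p, ENNReal.ofReal (2 ^ (s / 2) * Real.Gamma (s / 2)) * ‖p.1 - p.2‖ₑ ^ (-s)
          ∂μ.prod μ :=
        lintegral_mono fun p ↦ lintegral_abs_rpow_mul_exp_neg_norm_smul_sq_le hs (p.1 - p.2)
    _ = ENNReal.ofReal (2 ^ (s / 2) * Real.Gamma (s / 2)) * rieszEnergy s μ := by
        rw [lintegral_const_mul _ (by fun_prop), lintegral_prod _ (by fun_prop), rieszEnergy]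

lemma le_inv_add_mul_sq {w : ℝ} (hw : 0 < w) (a : ℝ) : a ≤ w⁻¹ + w * a ^ 2 := by
  have hsq : w⁻¹ * (w * a - 1 / 2) ^ 2 = w * a ^ 2 - a + w⁻¹ / 4 := by
    field_simp
    ring
  have hnonneg : 0 ≤ w⁻¹ * (w * a - 1 / 2) ^ 2 := by positivity
  linarith [inv_pos.2 hw]

lemma le_mul_one_add_abs_rpow_neg_add {r a M : ℝ} (hr : 0 ≤ r) (hM : 0 ≤ M) (ha : a ≤ M) (t : ℝ) :
    a ≤ (M + 1) * 2 ^ r * (1 + |t|) ^ (-r) + |t| ^ r * a ^ 2 := by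
  have hquot : 2 ^ r * (1 + |t|) ^ (-r) = (2 / (1 + |t|)) ^ r := by
    rw [Real.div_rpow two_pos.le (by positivity), Real.rpow_neg (by positivity), div_eq_mul_inv]
  rw [mul_assoc, hquot]
  rcases le_total |t| 1 with ht | ht
  · have hone : 1 ≤ (2 / (1 + |t|)) ^ r :=
      Real.one_le_rpow ((one_le_div₀ (by positivity)).2 (by linarith)) hr
    have hsq : 0 ≤ |t| ^ r * a ^ 2 := by positivity
    nlinarith
  · have ht0 : 0 < |t| := one_pos.trans_le ht
    have hinv : (|t| ^ r)⁻¹ ≤ (2 / (1 + |t|)) ^ r := by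
      rw [← Real.inv_rpow ht0.le]
      refine Real.rpow_le_rpow (by positivity) ?_ hr
      rw [inv_eq_one_div, div_le_div_iff₀ ht0 (by positivity)]
      linarith
    have hbase : 0 ≤ (2 / (1 + |t|)) ^ r := by positivity
    nlinarith [le_inv_add_mul_sq (Real.rpow_pos_of_pos ht0 r) a]

theorem integrable_charFun_smul_stdGaussian {μ : Measure E} [IsFiniteMeasure μ] {s : ℝ}
    (hs : 2 < s) (hμ : rieszEnergy s μ < ∞) :
    Integrable (fun p : E × ℝ ↦ charFun μ (p.2 • p.1)) ((stdGaussian E).prod volume) := by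
  have : Measurable (charFun μ) := measurable_charFun
  have hweighted : Integrable (fun p : E × ℝ ↦ |p.2| ^ (s - 1) * ‖charFun μ (p.2 • p.1)‖ ^ 2)
      ((stdGaussian E).prod volume) := by
    refine ⟨by fun_prop, ?_⟩
    rw [hasFiniteIntegral_iff_ofReal (.of_forall fun _ ↦ by positivity)]
    simp_rw [ENNReal.ofReal_mul (Real.rpow_nonneg (abs_nonneg _) (s - 1)),
      ENNReal.ofReal_pow (norm_nonneg _), ofReal_norm]
    exact (lintegral_abs_rpow_mul_enorm_charFun_sq_le μ (by linarith)).trans_lt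
      (ENNReal.mul_lt_top ENNReal.ofReal_lt_top hμ)
  have htail : Integrable (fun p : E × ℝ ↦
      (μ.real univ + 1) * 2 ^ (s - 1) * (1 + |p.2|) ^ (-(s - 1)))
      ((stdGaussian E).prod volume) :=
    ((integrable_one_add_norm (E := ℝ) (by simp; linarith)).const_mul _).comp_snd (stdGaussian E)
  exact (htail.add hweighted).mono' (by fun_prop) (.of_forall fun p ↦
    le_mul_one_add_abs_rpow_neg_add (by linarith) measureReal_nonneg (norm_charFun_le _) p.2)

theorem not_ae_integral_charFun_mul_charFun_neg_smul_eq_zero {μ ν : Measure E}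
    [IsFiniteMeasure μ] [IsFiniteMeasure ν] (hμ : μ ≠ 0) (hν : ν ≠ 0)
    (hint : Integrable (fun p : E × ℝ ↦ charFun μ (p.2 • p.1)) ((stdGaussian E).prod volume)) :
    ¬ ∀ᵐ e ∂stdGaussian E, ∫ t : ℝ, charFun μ (t • e) * charFun ν (-(t • e)) = 0 := by
  intro hzero
  have : Measurable (charFun ν) := measurable_charFun
  set J : ℝ → ℝ := fun t ↦ ∫ p, Real.exp (-‖t • (p.1 - p.2)‖ ^ 2 / 2) ∂μ.prod ν with hJ
  have : NeZero (μ.prod ν) := ⟨by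
    rw [← Measure.measure_univ_ne_zero, ← univ_prod_univ, Measure.prod_prod]
    exact mul_ne_zero (Measure.measure_univ_ne_zero.2 hμ) (Measure.measure_univ_ne_zero.2 hν)⟩
  have hJpos (t : ℝ) : 0 < J t :=
    integral_exp_pos (integrable_exp_neg_norm_smul_sub_sq μ ν t)
  have hcorr : Integrable (fun p : E × ℝ ↦ charFun μ (p.2 • p.1) * charFun ν (-(p.2 • p.1)))
      ((stdGaussian E).prod volume) :=
    hint.mul_bdd (c := ν.real univ) (by fun_prop) (.of_forall fun p ↦ norm_charFun_le _)
  have hJint : Integrable J := by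
    simpa only [integral_charFun_mul_charFun_neg_stdGaussian, RCLike.re_to_complex,
      Complex.ofReal_re] using hcorr.integral_prod_right.re
  have hJzero : ∫ t, J t = 0 := by
    rw [← Complex.ofReal_eq_zero, ← integral_complex_ofReal]
    simp_rw [hJ, ← integral_charFun_mul_charFun_neg_stdGaussian]
    rw [← integral_integral_swap hcorr]
    exact integral_eq_zero_of_ae hzero
  rw [integral_eq_zero_iff_of_nonneg (fun t ↦ (hJpos t).le) hJint] at hJzero
  obtain ⟨t, ht⟩ := hJzero.exists
  exact (hJpos t).ne' ht

end RieszEnergy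

section Localization

variable {E : Type*} [NormedAddCommGroup E] [MeasurableSpace E]

lemma rieszEnergy_mono (s : ℝ) {μ ν : Measure E} (hμν : μ ≤ ν) :
    rieszEnergy s μ ≤ rieszEnergy s ν :=
  lintegral_mono' hμν fun _ ↦ lintegral_mono' hμν le_rfl

lemma rpow_neg_mul_measure_mul_self_le_rieszEnergy (μ : Measure E) {s : ℝ} (hs : 0 ≤ s)
    {B : Set E} (hB : MeasurableSet B) {r : ℝ≥0∞} (hr : ∀ x ∈ B, ∀ y ∈ B, ‖x - y‖ₑ ≤ r) :
    r ^ (-s) * (μ B * μ B) ≤ rieszEnergy s μ :=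
  calc r ^ (-s) * (μ B * μ B) = ∫⁻ _ in B, ∫⁻ _ in B, r ^ (-s) ∂μ ∂μ := by
        simp only [setLIntegral_const, mul_assoc]
    _ ≤ ∫⁻ x in B, ∫⁻ y in B, ‖x - y‖ₑ ^ (-s) ∂μ ∂μ :=
        setLIntegral_mono' hB fun x hx ↦ setLIntegral_mono' hB fun y hy ↦ by
          simpa only [ENNReal.rpow_neg, ENNReal.inv_le_inv] using
            ENNReal.rpow_le_rpow (hr x hx y hy) hs
    _ ≤ rieszEnergy s μ := rieszEnergy_mono s Measure.restrict_le_self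

lemma nontrivial_of_rieszEnergy_lt_top {μ : Measure E} (hμ : μ ≠ 0) {s : ℝ} (hs : 0 < s)
    (hμs : rieszEnergy s μ < ∞) : Nontrivial E := by
  by_contra htrivial
  rw [not_nontrivial_iff_subsingleton] at htrivial
  have hle := rpow_neg_mul_measure_mul_self_le_rieszEnergy μ hs.le .univ (r := 0)
    fun x _ y _ ↦ by simp [Subsingleton.elim x y]
  rw [ENNReal.zero_rpow_of_neg (neg_lt_zero.2 hs), ENNReal.top_mul (by simpa using hμ)] at hle
  exact hμs.not_ge hle

variable [OpensMeasurableSpace E]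

lemma measure_closedBall_lt_top_of_rieszEnergy_lt_top {μ : Measure E} {s : ℝ} (hs : 0 < s)
    (hμs : rieszEnergy s μ < ∞) (x : E) (R : ℝ) : μ (closedBall x R) < ∞ := by
  have hdiam : ∀ y ∈ closedBall x R, ∀ z ∈ closedBall x R, ‖y - z‖ₑ ≤ ENNReal.ofReal (R + R) :=
    fun y hy z hz ↦ by
      rw [← edist_eq_enorm_sub, edist_dist]
      exact ENNReal.ofReal_le_ofReal ((dist_triangle_right y z x).trans (add_le_add hy hz))
  have hlt := (rpow_neg_mul_measure_mul_self_le_rieszEnergy μ hs.le measurableSet_closedBall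
    hdiam).trans_lt hμs
  by_contra! htop
  rw [top_le_iff.1 htop, ENNReal.top_mul_top, ENNReal.mul_top] at hlt
  · exact hlt.false
  · simp [ENNReal.rpow_eq_zero_iff, hs, hs.not_gt]

lemma exists_le_isFiniteMeasure_isCompact_support [ProperSpace E] {μ : Measure E} (hμ : μ ≠ 0)
    {s : ℝ} (hs : 0 < s) (hμs : rieszEnergy s μ < ∞) :
    ∃ μ' ≤ μ, IsFiniteMeasure μ' ∧ μ' ≠ 0 ∧ IsCompact μ'.support := by
  obtain ⟨R, hR⟩ := exists_pos_ball (0 : E) hμ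
  refine ⟨μ.restrict (closedBall 0 R), Measure.restrict_le_self, ⟨?_⟩, ?_, ?_⟩
  · rw [Measure.restrict_apply_univ]
    exact measure_closedBall_lt_top_of_rieszEnergy_lt_top hs hμs 0 R
  · rw [Ne, Measure.restrict_eq_zero]
    exact (hR.trans_le (measure_mono ball_subset_closedBall)).ne'
  · refine (isCompact_closedBall (0 : E) R).of_isClosed_subset Measure.isClosed_support ?_
    exact Measure.support_subset_of_isClosed isClosed_closedBall
      (ae_restrict_mem measurableSet_closedBall)

end Localization

section Projections

lemma support_map_subset_closure_image {X Y : Type*} [TopologicalSpace X]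
    [HereditarilyLindelofSpace X] [MeasurableSpace X] [OpensMeasurableSpace X] [TopologicalSpace Y]
    [MeasurableSpace Y] [BorelSpace Y] {f : X → Y} (hf : Continuous f) (μ : Measure X) :
    (μ.map f).support ⊆ closure (f '' μ.support) := by
  refine Measure.support_subset_of_isClosed isClosed_closure ?_
  rw [mem_ae_map_iff hf.aemeasurable isClosed_closure.measurableSet]
  exact mem_of_superset Measure.support_mem_ae fun x hx ↦ subset_closure (mem_image_of_mem f hx)

variable {E : Type*} [NormedAddCommGroup E] [InnerProductSpace ℝ E]

lemma image_inner_smul (A : Set E) (c : ℝ) (e : E) :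
    (fun x ↦ ⟪x, c • e⟫) '' A = c • (fun x ↦ ⟪x, e⟫) '' A := by
  simp only [inner_smul_right, ← image_smul, image_image, smul_eq_mul]

lemma interior_image_inner_smul_inter_nonempty {A B : Set E} {c : ℝ} (hc : c ≠ 0) {e : E}
    (h : (interior ((fun x ↦ ⟪x, e⟫) '' A ∩ (fun x ↦ ⟪x, e⟫) '' B)).Nonempty) :
    (interior ((fun x ↦ ⟪x, c • e⟫) '' A ∩ (fun x ↦ ⟪x, c • e⟫) '' B)).Nonempty := by
  rw [image_inner_smul, image_inner_smul, ← smul_set_inter₀ hc, interior_smul₀ hc]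
  exact h.smul_set

variable [MeasurableSpace E] [BorelSpace E]

lemma charFun_map_inner (μ : Measure E) (e : E) (t : ℝ) :
    charFun (μ.map fun x ↦ ⟪x, e⟫) t = charFun μ (t • e) := by
  rw [charFun_apply, integral_map (by fun_prop) (by fun_prop), charFun_apply]
  simp [inner_smul_right]

variable [FiniteDimensional ℝ E] {μ ν : Measure E} {s t : ℝ}

lemma support_map_inner_subset_image (hμ : IsCompact μ.support) (e : E) :
    (μ.map fun x ↦ ⟪x, e⟫).support ⊆ (fun x ↦ ⟪x, e⟫) '' μ.support := by
  have hcont : Continuous fun x ↦ ⟪x, e⟫ := by fun_prop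
  exact (support_map_subset_closure_image hcont μ).trans_eq
    (hμ.image hcont).isClosed.closure_eq

lemma interior_image_inner_inter_nonempty [IsFiniteMeasure μ] [IsFiniteMeasure ν]
    (hμc : IsCompact μ.support) (hνc : IsCompact ν.support) {e : E}
    (hμ : Integrable fun t : ℝ ↦ charFun μ (t • e)) (hν : Integrable fun t : ℝ ↦ charFun ν (t • e))
    (h : ∫ t : ℝ, charFun μ (t • e) * charFun ν (-(t • e)) ≠ 0) :
    (interior ((fun x ↦ ⟪x, e⟫) '' μ.support ∩ (fun x ↦ ⟪x, e⟫) '' ν.support)).Nonempty := by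
  refine (interior_support_inter_support_nonempty (ρ := μ.map fun x ↦ ⟪x, e⟫)
    (τ := ν.map fun x ↦ ⟪x, e⟫) ?_ ?_ ?_).mono (interior_mono (inter_subset_inter
      (support_map_inner_subset_image hμc e) (support_map_inner_subset_image hνc e)))
  · simpa only [← charFun_map_inner] using hμ
  · simpa only [← charFun_map_inner] using hν
  · simpa only [charFun_map_inner, neg_smul] using h

theorem frequently_interior_image_inner_inter_nonempty [IsFiniteMeasure μ] [IsFiniteMeasure ν]
    (hs : 2 < s) (ht : 2 < t) (hμ0 : μ ≠ 0) (hν0 : ν ≠ 0) (hμc : IsCompact μ.support)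
    (hνc : IsCompact ν.support) (hμs : rieszEnergy s μ < ∞) (hνt : rieszEnergy t ν < ∞) :
    ∃ᶠ e in ae (volume : Measure E),
      (interior ((fun x ↦ ⟪x, e⟫) '' μ.support ∩ (fun x ↦ ⟪x, e⟫) '' ν.support)).Nonempty := by
  have hμint := integrable_charFun_smul_stdGaussian hs hμs
  have hνint := integrable_charFun_smul_stdGaussian ht hνt
  have hcorr : ∃ᶠ e in ae (stdGaussian E),
      ∫ t : ℝ, charFun μ (t • e) * charFun ν (-(t • e)) ≠ 0 :=
    not_eventually.1 (not_ae_integral_charFun_mul_charFun_neg_smul_eq_zero hμ0 hν0 hμint)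
  refine Frequently.filter_mono ?_ stdGaussian_absolutelyContinuous_volume.ae_le
  refine (hcorr.and_eventually (hμint.prod_right_ae.and hνint.prod_right_ae)).mono fun e he ↦ ?_
  exact interior_image_inner_inter_nonempty hμc hνc he.2.1 he.2.2 he.1

theorem frequently_interior_image_inner_inter_nonempty_of_rieszEnergy_lt_top (hs : 2 < s)
    (ht : 2 < t) (hμ0 : μ ≠ 0) (hν0 : ν ≠ 0) (hμs : rieszEnergy s μ < ∞)
    (hνt : rieszEnergy t ν < ∞) :
    ∃ᶠ e in ae (volume : Measure E),
      (interior ((fun x ↦ ⟪x, e⟫) '' μ.support ∩ (fun x ↦ ⟪x, e⟫) '' ν.support)).Nonempty := by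
  obtain ⟨μ', hμ', _, hμ'0, hμ'c⟩ :=
    exists_le_isFiniteMeasure_isCompact_support hμ0 (by linarith) hμs
  obtain ⟨ν', hν', _, hν'0, hν'c⟩ :=
    exists_le_isFiniteMeasure_isCompact_support hν0 (by linarith) hνt
  refine (frequently_interior_image_inner_inter_nonempty hs ht hμ'0 hν'0 hμ'c hν'c
    ((rieszEnergy_mono s hμ').trans_lt hμs) ((rieszEnergy_mono t hν').trans_lt hνt)).mono
    fun e he ↦ he.mono (interior_mono (inter_subset_inter ?_ ?_))
  · exact image_mono (Measure.support_mono hμ')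
  · exact image_mono (Measure.support_mono hν')

theorem stmt_9_general (hs : 2 < s) (ht : 2 < t) (hμ0 : μ ≠ 0) (hν0 : ν ≠ 0)
    (hμs : rieszEnergy s μ < ∞) (hνt : rieszEnergy t ν < ∞) :
    0 < μH[(finrank ℝ E : ℝ) - 1] {e : E | ‖e‖ = 1 ∧
      (interior ((fun x ↦ ⟪x, e⟫) '' μ.support ∩ (fun x ↦ ⟪x, e⟫) '' ν.support)).Nonempty} := by
  have := nontrivial_of_rieszEnergy_lt_top hμ0 (by linarith) hμs
  rw [pos_iff_ne_zero]
  intro hnull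
  have hcone := measure_eq_zero_iff_ae_notMem.1
    (addHaar_univ_smul_eq_zero_of_hausdorffMeasure_eq_zero volume hnull)
  refine frequently_interior_image_inner_inter_nonempty_of_rieszEnergy_lt_top hs ht hμ0 hν0 hμs
    hνt ?_
  filter_upwards [hcone, Measure.ae_ne volume 0] with e he he0 hint
  have hnorm : ‖e‖ ≠ 0 := norm_ne_zero_iff.2 he0
  exact he ⟨‖e‖, mem_univ _, ‖e‖⁻¹ • e, ⟨norm_smul_inv_norm he0,
    interior_image_inner_smul_inter_nonempty (inv_ne_zero hnorm) hint⟩,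
    smul_inv_smul₀ hnorm e⟩

end Projections

lemma sptm_eq_support {n : ℕ} (μ : Measure (EuclideanSpace ℝ (Fin n))) :
    sptm n μ = μ.support :=
  ext fun _ ↦ nhds_basis_ball.mem_measureSupport.symm

theorem stmt_9 (n : ℕ) (hn : 3 ≤ n) (s t : ℝ) (hs : 2 < s) (ht : 2 < t)
    (μ ν : Measure (EuclideanSpace ℝ (Fin n)))
    [IsFiniteMeasure μ] [IsFiniteMeasure ν] (hμ0 : μ ≠ 0) (hν0 : ν ≠ 0)
    (hμc : IsCompact (sptm n μ)) (hνc : IsCompact (sptm n ν))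
    (hμe : energyI n s μ < ∞) (hνe : energyI n t ν < ∞) :
    0 < μH[(n : ℝ) - 1]
      {e : EuclideanSpace ℝ (Fin n) | ‖e‖ = 1 ∧
        (interior ((fun x => ⟪x, e⟫) '' sptm n μ ∩
          (fun x => ⟪x, e⟫) '' sptm n ν)).Nonempty} := by
  simpa only [sptm_eq_support, finrank_euclideanSpace_fin] using
    stmt_9_general hs ht hμ0 hν0 hμe hνe
end

section
/- Let n ≥ 2 and let A ⊆ ℝⁿ be a Borel set with dimH A > n−1. Then for every point x ∈ ℝⁿ and for H^{n−1}-almost every unit vector e ∈ S^{n−1}, the line section satisfies dimH( A ∩ { x + r·e : r ∈ ℝ } ) ≤ dimH A − (n−1). -/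
open MeasureTheory Metric Set
open scoped ENNReal RealInnerProductSpace

/-!
Let `f` be a nonzero functional. The central projection `y ↦ (f (y - x))⁻¹ • (y - x)` onto the
hyperplane `{f = 1}` is locally Lipschitz off the hyperplane `f y = f x`, and its fibres there are
the lines through `x`, with `x` removed. Integrating the cost of a cover over the fibres
(Eilenberg's inequality) shows that almost every fibre of a locally Lipschitz map from `s` into an
`m`-dimensional space has dimension at most `dimH s - m`. Hence the set of directions of bad lines
is a cone which meets every hyperplane `{f = 1}` in a null set. On each such hyperplane
normalisation is Lipschitz, so this cone also meets the unit sphere in a null set.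
-/

open Filter Module Topology
open scoped NNReal

section UpperRegular

variable {Y Z : Type*} [PseudoEMetricSpace Y] [MeasurableSpace Y]
  [PseudoEMetricSpace Z] [MeasurableSpace Z]

/-- A measure is upper `m`-regular if the mass of a set is at most a constant multiple of the `m`-th
power of its diameter; this is the sense in which the target of a projection is
`m`-dimensional. -/
def IsUpperRegular (m : ℝ≥0) (ν : Measure Y) : Prop :=
  ∃ C : ℝ≥0, ∀ t : Set Y, ν t ≤ C * ediam t ^ (m : ℝ)

lemma IsUpperRegular.map [OpensMeasurableSpace Z] {m : ℝ≥0} {ν : Measure Y}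
    (hν : IsUpperRegular m ν) {g : Y → Z} (hg : Measurable g) {K : ℝ≥0}
    (hK : AntilipschitzWith K g) : IsUpperRegular m (ν.map g) := by
  obtain ⟨C, hC⟩ := hν
  refine ⟨C * K ^ (m : ℝ), fun t => ?_⟩
  calc ν.map g t ≤ ν.map g (closure t) := measure_mono subset_closure
    _ = ν (g ⁻¹' closure t) := Measure.map_apply hg isClosed_closure.measurableSet
    _ ≤ C * ediam (g ⁻¹' closure t) ^ (m : ℝ) := hC _
    _ ≤ C * (K * ediam t) ^ (m : ℝ) := by
      gcongr
      exact (hK.ediam_preimage_le _).trans_eq (by rw [ediam_closure])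
    _ = (C * K ^ (m : ℝ) : ℝ≥0) * ediam t ^ (m : ℝ) := by
      rw [ENNReal.mul_rpow_of_nonneg _ _ m.coe_nonneg, ENNReal.coe_mul,
        ENNReal.coe_rpow_of_nonneg _ m.coe_nonneg, mul_assoc]

lemma isUpperRegular_addHaar {F : Type*} [NormedAddCommGroup F] [NormedSpace ℝ F]
    [FiniteDimensional ℝ F] [MeasurableSpace F] [BorelSpace F] (μ : Measure F)
    [μ.IsAddHaarMeasure] : IsUpperRegular (finrank ℝ F) μ := by
  have hfin : μ (closedBall 0 1) ≠ ∞ := measure_closedBall_lt_top.ne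
  refine ⟨(μ (closedBall 0 1)).toNNReal, fun t => ?_⟩
  rw [ENNReal.coe_toNNReal hfin, NNReal.coe_natCast, ENNReal.rpow_natCast]
  rcases t.eq_empty_or_nonempty with rfl | ⟨x, hx⟩
  · simp
  by_cases hbdd : Bornology.IsBounded t
  · calc μ t ≤ μ (closedBall x (diam t)) :=
          measure_mono fun y hy => dist_le_diam_of_mem hbdd hy hx
      _ = μ (closedBall 0 1) * ediam t ^ finrank ℝ F := by
        rw [Measure.addHaar_closedBall' μ x diam_nonneg, mul_comm, ENNReal.ofReal_pow diam_nonneg,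
          diam, ENNReal.ofReal_toReal hbdd.ediam_ne_top]
  · have : Nontrivial F := by
      by_contra h
      rw [not_nontrivial_iff_subsingleton] at h
      exact hbdd t.toFinite.isBounded
    have hdiam : ediam t = ∞ := by rwa [isBounded_iff_ediam_ne_top, not_not] at hbdd
    have hpos : μ (closedBall 0 1) ≠ 0 := (measure_closedBall_pos μ 0 one_pos).ne'
    rw [hdiam, ENNReal.top_pow finrank_pos.ne', ENNReal.mul_top hpos]
    exact le_top

end UpperRegular

section FiberCost

variable {X Y : Type*} [PseudoEMetricSpace X] [PseudoEMetricSpace Y]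

/-- The cost `∑ (diam (t l)) ^ a` of covering the fibre over `y` of `p` restricted to `s` by those
`t l` which meet it. The projections of the sets are replaced by their closures, to make the cost
measurable in `y`. -/
noncomputable def fiberCost (p : X → Y) (s : Set X) (t : ℕ → Set X) (a : ℝ) (y : Y) : ℝ≥0∞ :=
  ∑' l, (closure (p '' (t l ∩ s))).indicator (fun _ => ediam (t l) ^ a) y

lemma measurable_fiberCost [MeasurableSpace Y] [OpensMeasurableSpace Y] (p : X → Y) (s : Set X)
    (t : ℕ → Set X) (a : ℝ) : Measurable (fiberCost p s t a) :=
  Measurable.tsum fun _ => measurable_const.indicator isClosed_closure.measurableSet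

lemma lintegral_fiberCost_le [MeasurableSpace Y] [OpensMeasurableSpace Y] {m : ℝ≥0}
    {ν : Measure Y} {C : ℝ≥0} (hν : ∀ t : Set Y, ν t ≤ C * ediam t ^ (m : ℝ)) {K : ℝ≥0} {p : X → Y}
    {s : Set X} (hp : LipschitzOnWith K p s) (t : ℕ → Set X) {a : ℝ} (ha : 0 ≤ a) :
    ∫⁻ y, fiberCost p s t a y ∂ν ≤ C * K ^ (m : ℝ) * ∑' l, ediam (t l) ^ (a + m) := by
  have hmeas (l : ℕ) : MeasurableSet (closure (p '' (t l ∩ s))) := isClosed_closure.measurableSet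
  have hdiam (l : ℕ) : ediam (closure (p '' (t l ∩ s))) ≤ K * ediam (t l) := by
    rw [ediam_closure]
    simpa using hp.holderOnWith.ediam_image_inter_le (t l)
  unfold fiberCost
  rw [lintegral_tsum fun l => (measurable_const.indicator (hmeas l)).aemeasurable,
    ← ENNReal.tsum_mul_left]
  refine ENNReal.tsum_le_tsum fun l => ?_
  calc ∫⁻ y, (closure (p '' (t l ∩ s))).indicator (fun _ => ediam (t l) ^ a) y ∂ν
      = ediam (t l) ^ a * ν (closure (p '' (t l ∩ s))) := lintegral_indicator_const (hmeas l) _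
    _ ≤ ediam (t l) ^ a * (C * (K * ediam (t l)) ^ (m : ℝ)) := by
      gcongr
      exact (hν _).trans (by gcongr; exact hdiam l)
    _ = C * K ^ (m : ℝ) * ediam (t l) ^ (a + m) := by
      rw [ENNReal.mul_rpow_of_nonneg _ _ m.coe_nonneg,
        ENNReal.rpow_add_of_nonneg _ _ ha m.coe_nonneg]
      ring

end FiberCost

section Fibers

variable {X Y : Type*} [EMetricSpace X] [MeasurableSpace X] [BorelSpace X] [PseudoEMetricSpace Y]

lemma hausdorffMeasure_fiber_le_liminf_fiberCost {p : X → Y} {s : Set X} {t : ℕ → ℕ → Set X}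
    {r : ℕ → ℝ≥0∞} (hr : Tendsto r atTop (𝓝 0)) (hst : ∀ k, s ⊆ ⋃ l, t k l)
    (htr : ∀ k l, ediam (t k l) ≤ r k) {a : ℝ} (ha : 0 < a) (y : Y) :
    μH[a] (s ∩ p ⁻¹' {y}) ≤ liminf (fun k => fiberCost p s (t k) a y) atTop := by
  let t' (k l : ℕ) : Set X := {z | z ∈ t k l ∧ y ∈ closure (p '' (t k l ∩ s))}
  have ht'_diam (k l : ℕ) : ediam (t' k l) ≤ r k := (ediam_mono fun _ hz => hz.1).trans (htr k l)
  have ht'_cover (k : ℕ) : s ∩ p ⁻¹' {y} ⊆ ⋃ l, t' k l := by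
    rintro z ⟨hzs, rfl⟩
    obtain ⟨l, hzl⟩ := mem_iUnion.1 (hst k hzs)
    exact mem_iUnion.2 ⟨l, hzl, subset_closure ⟨z, ⟨hzl, hzs⟩, rfl⟩⟩
  refine (Measure.hausdorffMeasure_le_liminf_tsum a _ r hr t' (.of_forall ht'_diam)
    (.of_forall ht'_cover)).trans (liminf_le_liminf (.of_forall fun k => ?_))
  refine ENNReal.tsum_le_tsum fun l => ?_
  by_cases hy : y ∈ closure (p '' (t k l ∩ s)) <;> simp [t', hy, ha]

lemma exists_cover_tsum_lt_of_hausdorffMeasure_eq_zero {d : ℝ} (hd : 0 < d) {s : Set X}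
    (hs : μH[d] s = 0) {r ε : ℝ≥0∞} (hr : 0 < r) (hε : 0 < ε) :
    ∃ t : ℕ → Set X, s ⊆ ⋃ k, t k ∧ (∀ k, ediam (t k) ≤ r) ∧ ∑' k, ediam (t k) ^ d < ε := by
  rw [Measure.hausdorffMeasure_apply] at hs
  simp only [ENNReal.iSup_eq_zero] at hs
  have hlt := (hs r hr).trans_lt hε
  simp only [iInf_lt_iff] at hlt
  obtain ⟨t, hst, htr, hlt⟩ := hlt
  refine ⟨t, hst, htr, (ENNReal.tsum_le_tsum fun k => ?_).trans_lt hlt⟩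
  rcases (t k).eq_empty_or_nonempty with h | h <;> simp [h, hd]

variable [MeasurableSpace Y] [OpensMeasurableSpace Y] {m : ℝ≥0} {ν : Measure Y}

lemma ae_hausdorffMeasure_fiber_eq_zero (hν : IsUpperRegular m ν) {K : ℝ≥0} {p : X → Y}
    {s : Set X} (hp : LipschitzOnWith K p s) {a : ℝ} (ha : 0 < a) (hs : μH[a + m] s = 0) :
    ∀ᵐ y ∂ν, μH[a] (s ∩ p ⁻¹' {y}) = 0 := by
  obtain ⟨C, hC⟩ := hν
  obtain ⟨r, -, hr, hr0⟩ := exists_seq_strictAnti_tendsto' (zero_lt_one (α := ℝ≥0∞))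
  choose t hst htr ht_lt using fun k =>
    exists_cover_tsum_lt_of_hausdorffMeasure_eq_zero (by positivity) hs (hr k).1 (hr k).1
  have hcost_le (k : ℕ) : ∫⁻ y, fiberCost p s (t k) a y ∂ν ≤ C * K ^ (m : ℝ) * r k :=
    (lintegral_fiberCost_le hC hp (t k) ha.le).trans (by gcongr; exact (ht_lt k).le)
  have hbound_lim : Tendsto (fun k => C * K ^ (m : ℝ) * r k) atTop (𝓝 0) := by
    simpa using ENNReal.Tendsto.const_mul hr0 (.inr (by finiteness))
  have hmeas (k : ℕ) : Measurable (fiberCost p s (t k) a) := measurable_fiberCost p s (t k) a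
  have hlintegral : ∫⁻ y, liminf (fun k => fiberCost p s (t k) a y) atTop ∂ν = 0 := by
    refine le_antisymm ((lintegral_liminf_le hmeas).trans ?_) zero_le
    rw [← hbound_lim.liminf_eq]
    exact liminf_le_liminf (.of_forall hcost_le)
  filter_upwards [(lintegral_eq_zero_iff (Measurable.liminf hmeas)).1 hlintegral] with y hy
  exact le_antisymm
    ((hausdorffMeasure_fiber_le_liminf_fiberCost hr0 hst htr ha y).trans_eq hy) zero_le

lemma ae_dimH_fiber_le_of_lipschitzOnWith (hν : IsUpperRegular m ν) {K : ℝ≥0} {p : X → Y}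
    {s : Set X} (hp : LipschitzOnWith K p s) :
    ∀ᵐ y ∂ν, dimH (s ∩ p ⁻¹' {y}) ≤ dimH s - m := by
  have hle_of_lt (q : ℝ≥0) (hq : dimH s - m < q) : ∀ᵐ y ∂ν, dimH (s ∩ p ⁻¹' {y}) ≤ q := by
    have hq0 : 0 < q := by exact_mod_cast zero_le.trans_lt hq
    have hnull : μH[((q + m : ℝ≥0) : ℝ)] s = 0 := hausdorffMeasure_of_dimH_lt (by
      rw [ENNReal.coe_add]
      exact ENNReal.lt_add_of_sub_lt_right (.inr ENNReal.coe_ne_top) hq)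
    filter_upwards [ae_hausdorffMeasure_fiber_eq_zero hν hp (NNReal.coe_pos.2 hq0) hnull] with y hy
    exact dimH_le_of_hausdorffMeasure_ne_top (by simp [hy])
  rcases eq_or_ne (dimH s - m) ∞ with htop | htop
  · simp [htop]
  obtain ⟨q, -, hq, hq_lim⟩ := exists_seq_strictAnti_tendsto' htop.lt_top
  have hall : ∀ᵐ y ∂ν, ∀ k, dimH (s ∩ p ⁻¹' {y}) ≤ q k := by
    refine ae_all_iff.2 fun k => ?_
    lift q k to ℝ≥0 using (hq k).2.ne with qk hqk
    exact hle_of_lt qk (hqk ▸ (hq k).1)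
  filter_upwards [hall] with y hy
  exact ge_of_tendsto' hq_lim hy

theorem ae_dimH_fiber_le_of_locallyLipschitzOn [SecondCountableTopology X]
    (hν : IsUpperRegular m ν) {p : X → Y} {s : Set X} (hp : LocallyLipschitzOn s p) :
    ∀ᵐ y ∂ν, dimH (s ∩ p ⁻¹' {y}) ≤ dimH s - m := by
  have hlocal : ∀ z ∈ s, ∃ (K : ℝ≥0) (t : Set X), t ∈ 𝓝[s] z ∧ LipschitzOnWith K p t :=
    fun z hz => hp hz
  choose! K t ht hK using hlocal
  obtain ⟨c, hcs, hc, hsc⟩ := TopologicalSpace.countable_cover_nhdsWithin ht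
  have hpiece : ∀ z ∈ c, ∀ᵐ y ∂ν, dimH ((t z ∩ s) ∩ p ⁻¹' {y}) ≤ dimH (t z ∩ s) - m :=
    fun z hz => ae_dimH_fiber_le_of_lipschitzOnWith hν ((hK z (hcs hz)).mono inter_subset_left)
  filter_upwards [(ae_ball_iff hc).2 hpiece] with y hy
  have hcover : s ∩ p ⁻¹' {y} ⊆ ⋃ z ∈ c, (t z ∩ s) ∩ p ⁻¹' {y} := by
    rintro w ⟨hws, hwy⟩
    obtain ⟨z, hz, hwz⟩ := mem_iUnion₂.1 (hsc hws)
    exact mem_iUnion₂.2 ⟨z, hz, ⟨hwz, hws⟩, hwy⟩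
  calc dimH (s ∩ p ⁻¹' {y}) ≤ ⨆ z ∈ c, dimH ((t z ∩ s) ∩ p ⁻¹' {y}) :=
        (dimH_mono hcover).trans_eq (dimH_bUnion hc _)
    _ ≤ dimH s - m := iSup₂_le fun z hz =>
        (hy z hz).trans (tsub_le_tsub_right (dimH_mono inter_subset_right) _)

end Fibers

section Directions

variable {E : Type*} [NormedAddCommGroup E] [NormedSpace ℝ E]

lemma norm_mul_norm_normalize_sub_normalize_le (x y : E) :
    ‖x‖ * ‖NormedSpace.normalize x - NormedSpace.normalize y‖ ≤ 2 * ‖x - y‖ := by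
  have hy : ‖NormedSpace.normalize y‖ ≤ 1 := by
    rcases eq_or_ne y 0 with rfl | hy
    · simp
    · exact (NormedSpace.norm_normalize hy).le
  have hsplit : ‖x‖ • (NormedSpace.normalize x - NormedSpace.normalize y) =
      (x - y) - (‖x‖ - ‖y‖) • NormedSpace.normalize y := by
    simp only [smul_sub, sub_smul, NormedSpace.norm_smul_normalize]
    abel
  calc ‖x‖ * ‖NormedSpace.normalize x - NormedSpace.normalize y‖
      = ‖(x - y) - (‖x‖ - ‖y‖) • NormedSpace.normalize y‖ := by
        rw [← hsplit, norm_smul, norm_norm]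
    _ ≤ ‖x - y‖ + |‖x‖ - ‖y‖| * ‖NormedSpace.normalize y‖ :=
        (norm_sub_le _ _).trans_eq (by rw [norm_smul, Real.norm_eq_abs])
    _ ≤ ‖x - y‖ + ‖x - y‖ * 1 := by
        gcongr
        exact abs_norm_sub_norm_le x y
    _ = 2 * ‖x - y‖ := by ring

lemma lipschitzOnWith_normalize_hyperplane (f : StrongDual ℝ E) :
    LipschitzOnWith (2 * ‖f‖₊) NormedSpace.normalize {z | f z = 1} := by
  refine LipschitzOnWith.of_dist_le_mul fun x (hx : f x = 1) y _ => ?_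
  have hfx : 1 ≤ ‖f‖ * ‖x‖ := by simpa [hx] using f.le_opNorm x
  rw [dist_eq_norm, dist_eq_norm]
  calc ‖NormedSpace.normalize x - NormedSpace.normalize y‖
      ≤ ‖f‖ * ‖x‖ * ‖NormedSpace.normalize x - NormedSpace.normalize y‖ :=
        le_mul_of_one_le_left (norm_nonneg _) hfx
    _ = ‖f‖ * (‖x‖ * ‖NormedSpace.normalize x - NormedSpace.normalize y‖) := mul_assoc _ _ _
    _ ≤ ‖f‖ * (2 * ‖x - y‖) :=
        mul_le_mul_of_nonneg_left (norm_mul_norm_normalize_sub_normalize_le x y) (norm_nonneg f)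
    _ = (2 * ‖f‖₊ : ℝ≥0) * ‖x - y‖ := by
        push_cast
        ring

theorem hausdorffMeasure_cone_inter_sphere_eq_zero [MeasurableSpace E] [BorelSpace E]
    [SecondCountableTopology E] {d : ℝ} (hd : 0 ≤ d) {D : Set E}
    (hD : ∀ e ∈ D, ∀ c : ℝ, 0 < c → c • e ∈ D)
    (hnull : ∀ f : StrongDual ℝ E, f ≠ 0 → μH[d] (D ∩ {z | f z = 1}) = 0) :
    μH[d] (D ∩ sphere 0 1) = 0 := by
  refine measure_null_of_locally_null _ fun e he => ?_
  have he_norm : ‖e‖ = 1 := by simpa using he.2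
  obtain ⟨f, -, hfe⟩ := exists_dual_vector ℝ e (by simp [he_norm])
  replace hfe : f e = 1 := by simpa [he_norm] using hfe
  have hf : f ≠ 0 := by
    rintro rfl
    simp at hfe
  refine ⟨(D ∩ sphere 0 1) ∩ {z | 0 < f z}, inter_mem self_mem_nhdsWithin
    (mem_nhdsWithin_of_mem_nhds ((isOpen_lt continuous_const f.continuous).mem_nhds ?_)), ?_⟩
  · simp [hfe]
  have hsub : (D ∩ sphere 0 1) ∩ {z | 0 < f z} ⊆ NormedSpace.normalize '' (D ∩ {z | f z = 1}) := by
    rintro z ⟨⟨hzD, hz⟩, hfz : 0 < f z⟩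
    refine ⟨(f z)⁻¹ • z, ⟨hD z hzD _ (inv_pos.2 hfz), by simp [hfz.ne']⟩, ?_⟩
    rw [NormedSpace.normalize_smul_of_pos (inv_pos.2 hfz),
      NormedSpace.normalize_eq_self_of_norm_eq_one (mem_sphere_zero_iff_norm.1 hz)]
  have himage := ((lipschitzOnWith_normalize_hyperplane f).mono
    (inter_subset_right (s := D))).hausdorffMeasure_image_le hd
  rw [hnull f hf, mul_zero] at himage
  exact measure_mono_null hsub (le_antisymm himage zero_le)

end Directions

section Lines

variable {E : Type*} [NormedAddCommGroup E] [NormedSpace ℝ E]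

/-- The full line through `x` in direction `e`; it degenerates to `{x}` for `e = 0`. -/
def lineThrough (x e : E) : Set E := {y | ∃ r : ℝ, y = x + r • e}

lemma lineThrough_smul (x e : E) {c : ℝ} (hc : c ≠ 0) :
    lineThrough x (c • e) = lineThrough x e := by
  ext y
  constructor
  · rintro ⟨r, rfl⟩
    exact ⟨r * c, by rw [mul_smul]⟩
  · rintro ⟨r, rfl⟩
    exact ⟨r * c⁻¹, by rw [smul_smul, inv_mul_cancel_right₀ hc]⟩

/-- The central projection from `x` onto the hyperplane `{f = 1}` of directions. It is meant for the
points `y` with `f y ≠ f x`, and takes the value `0` at the others. -/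
noncomputable def centralProj (f : StrongDual ℝ E) (x y : E) : E := (f (y - x))⁻¹ • (y - x)

lemma locallyLipschitzOn_centralProj (f : StrongDual ℝ E) (x : E) :
    LocallyLipschitzOn {y | f (y - x) ≠ 0} (centralProj f x) := by
  intro y hy
  have hcd : ContDiffAt ℝ 1 (centralProj f x) y := by
    unfold centralProj
    exact ContDiffAt.smul (ContDiffAt.inv (by fun_prop) hy) (by fun_prop)
  obtain ⟨K, t, ht, hK⟩ := hcd.exists_lipschitzOnWith
  exact ⟨K, t, mem_nhdsWithin_of_mem_nhds ht, hK⟩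

lemma lineThrough_subset_union_fiber_centralProj {f : StrongDual ℝ E} {z : E} (hz : f z = 1)
    (x : E) : lineThrough x z ⊆ {x} ∪ {y | f (y - x) ≠ 0} ∩ centralProj f x ⁻¹' {z} := by
  rintro _ ⟨r, rfl⟩
  rcases eq_or_ne r 0 with rfl | hr
  · simp
  · exact .inr (by simp [centralProj, hz, hr])

variable [FiniteDimensional ℝ E] [MeasurableSpace E] [BorelSpace E] {d : ℕ}

lemma isUpperRegular_hausdorffMeasure_hyperplane (hd : finrank ℝ E = d + 1) {f : StrongDual ℝ E}
    (hf : f ≠ 0) : IsUpperRegular d (μH[d].restrict {z | f z = 1}) := by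
  have hf_lin : f.toLinearMap ≠ 0 := fun h => hf (ContinuousLinearMap.coe_injective h)
  obtain ⟨v, hv⟩ : ∃ v, f v = 1 := LinearMap.surjective_of_ne_zero hf_lin 1
  have hker : finrank ℝ f.ker = d := by
    have := Module.Dual.finrank_ker_add_one_of_ne_zero hf_lin
    omega
  let g : f.ker → E := fun u => v + u
  have hg : Isometry g := (isometry_add_left v).comp isometry_subtype_coe
  have hrange : range g = {z | f z = 1} := by
    ext z
    constructor
    · rintro ⟨u, rfl⟩
      simp [g, hv]
    · intro hz
      exact ⟨⟨z - v, by simp_all⟩, by simp [g]⟩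
  have hHaar := isUpperRegular_addHaar (μH[finrank ℝ f.ker] : Measure f.ker)
  rw [hker] at hHaar
  rw [← hrange, ← hg.map_hausdorffMeasure (.inl d.cast_nonneg)]
  exact hHaar.map hg.continuous.measurable hg.antilipschitz

theorem ae_hyperplane_dimH_inter_lineThrough_le (hd : finrank ℝ E = d + 1) {f : StrongDual ℝ E}
    (hf : f ≠ 0) (A : Set E) (x : E) :
    ∀ᵐ z ∂(μH[d].restrict {z | f z = 1}), dimH (A ∩ lineThrough x z) ≤ dimH A - d := by
  have hmeas : MeasurableSet {z | f z = 1} :=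
    (isClosed_eq f.continuous continuous_const).measurableSet
  have hfiber := ae_dimH_fiber_le_of_locallyLipschitzOn
    (isUpperRegular_hausdorffMeasure_hyperplane hd hf)
    ((locallyLipschitzOn_centralProj f x).mono (inter_subset_right (s := A)))
  filter_upwards [hfiber, ae_restrict_mem hmeas] with z hz hfz
  calc dimH (A ∩ lineThrough x z)
      ≤ dimH ({x} ∪ (A ∩ {y | f (y - x) ≠ 0}) ∩ centralProj f x ⁻¹' {z}) := by
        refine dimH_mono fun y hy => ?_
        exact (lineThrough_subset_union_fiber_centralProj hfz x hy.2).imp_right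
          fun h => ⟨⟨hy.1, h.1⟩, h.2⟩
    _ = dimH ((A ∩ {y | f (y - x) ≠ 0}) ∩ centralProj f x ⁻¹' {z}) := by
        rw [dimH_union, dimH_singleton, max_eq_right zero_le]
    _ ≤ dimH (A ∩ {y | f (y - x) ≠ 0}) - d := hz
    _ ≤ dimH A - d := tsub_le_tsub_right (dimH_mono inter_subset_left) _

theorem stmt_11_general (hd : finrank ℝ E = d + 1) (A : Set E) (x : E) :
    ∀ᵐ e ∂(μH[d].restrict (sphere (0 : E) 1)), dimH (A ∩ lineThrough x e) ≤ dimH A - d := by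
  rw [ae_iff, Measure.restrict_apply' isClosed_sphere.measurableSet]
  refine hausdorffMeasure_cone_inter_sphere_eq_zero d.cast_nonneg (fun e he c hc => ?_)
    fun f hf => ?_
  · rwa [mem_ofPred_eq, lineThrough_smul x e hc.ne']
  · have hmeas : MeasurableSet {z | f z = 1} :=
      (isClosed_eq f.continuous continuous_const).measurableSet
    rw [← Measure.restrict_apply' hmeas]
    exact ae_iff.1 (ae_hyperplane_dimH_inter_lineThrough_le hd hf A x)

end Lines

theorem stmt_11 (n : ℕ) (hn : 2 ≤ n)
    (A : Set (EuclideanSpace ℝ (Fin n))) (hA : MeasurableSet A)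
    (hdA : (n : ℝ≥0∞) - 1 < dimH A) (x : EuclideanSpace ℝ (Fin n)) :
    ∀ᵐ e ∂(μH[(n : ℝ) - 1].restrict (sphere (0 : EuclideanSpace ℝ (Fin n)) 1)),
      dimH (A ∩ {y | ∃ r : ℝ, y = x + r • e}) ≤ dimH A - ((n : ℝ≥0∞) - 1) := by
  obtain ⟨d, rfl⟩ := Nat.exists_eq_add_of_le' (one_le_two.trans hn)
  simpa [lineThrough] using stmt_11_general finrank_euclideanSpace_fin A x
end

section
/- Let n ≥ 2 and let A ⊆ ℝⁿ be a Borel set with dimH A > 1. Then for every point x ∈ ℝⁿ and for H^{n−1}-almost every unit vector e ∈ S^{n−1}, the hyperplane section satisfies dimH( A ∩ ( x + e^⊥ ) ) ≤ dimH A − 1, where e^⊥ = { y ∈ ℝⁿ : ⟨y, e⟩ = 0 }. -/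
open MeasureTheory Metric Set
open scoped ENNReal RealInnerProductSpace

open Filter Module Topology
open scoped NNReal Pointwise

/-!
Almost every section of an `(s + d)`-null set is `s`-null as soon as the parameters whose section
meets a piece of diameter `r` have measure `O(r ^ d)`: in an efficient cover by pieces of diameters
`rᵢ`, the sum of the `rᵢ ^ s` over the pieces met by a random section has expectation
`O(∑ rᵢ ^ (s + d))`. We use this twice with `d = 1`. For the hyperplanes through `x` with Lebesgue
distributed normals, the measure bound is the volume of a slab and the sections of an
`(s + 1)`-null set are almost all `s`-null. For the spheres about the origin, it shows that a
Lebesgue-null cone, such as the set of exceptional normals, meets some sphere, and by homogeneity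
the unit sphere, in a null set.
-/

section NullSections

variable {Ω X : Type*} [MeasurableSpace Ω] {μ : Measure Ω}
  [EMetricSpace X] [MeasurableSpace X] [BorelSpace X]

theorem exists_cover_tsum_ediam_rpow_le_of_hausdorffMeasure_eq_zero {A : Set X} {s : ℝ}
    (hs : 0 < s) (hA : μH[s] A = 0) {ε : ℝ≥0∞} (hε : 0 < ε) :
    ∃ t : ℕ → Set X, (∀ i, t i ⊆ A) ∧ A ⊆ ⋃ i, t i ∧ (∀ i, ediam (t i) ≤ ε) ∧
      ∑' i, ediam (t i) ^ s ≤ ε := by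
  rw [Measure.hausdorffMeasure_apply] at hA
  have hlt := (iSup₂_eq_bot.1 hA ε hε).trans_lt hε
  simp only [iInf_lt_iff] at hlt
  obtain ⟨t, hAt, htε, hsum⟩ := hlt
  refine ⟨fun i => t i ∩ A, fun i => inter_subset_right, ?_,
    fun i => (ediam_mono inter_subset_left).trans (htε i),
    (ENNReal.tsum_le_tsum fun i => ?_).trans hsum.le⟩
  · rw [← iUnion_inter]
    exact subset_inter hAt Subset.rfl
  · rcases (t i).eq_empty_or_nonempty with hempty | hne
    · simp [hempty, hs]
    · rw [ciSup_pos hne]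
      gcongr
      exact inter_subset_left

theorem ae_liminf_tsum_indicator_eq_zero {ι : Type*} [Countable ι] {B : ℕ → ι → Set Ω}
    {c : ℕ → ι → ℝ≥0∞} (h : Tendsto (fun k => ∑' i, c k i * μ (B k i)) atTop (𝓝 0)) :
    ∀ᵐ ω ∂μ, liminf (fun k => ∑' i, (B k i).indicator (fun _ => c k i) ω) atTop = 0 := by
  let f (k : ℕ) (ω : Ω) : ℝ≥0∞ := ∑' i, (toMeasurable μ (B k i)).indicator (fun _ => c k i) ω
  have hmeas (k i) : Measurable ((toMeasurable μ (B k i)).indicator fun _ => c k i) :=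
    measurable_const.indicator (measurableSet_toMeasurable _ _)
  have hf (k) : Measurable (f k) := Measurable.tsum (hmeas k)
  have hint (k) : ∫⁻ ω, f k ω ∂μ = ∑' i, c k i * μ (B k i) := by
    rw [lintegral_tsum fun i => (hmeas k i).aemeasurable]
    simp only [lintegral_indicator_const (measurableSet_toMeasurable _ _), measure_toMeasurable]
  have hlim : ∫⁻ ω, liminf (fun k => f k ω) atTop ∂μ = 0 := by
    refine nonpos_iff_eq_zero.1 ((lintegral_liminf_le hf).trans_eq ?_)
    simp only [hint, h.liminf_eq]
  filter_upwards [(lintegral_eq_zero_iff (Measurable.liminf hf)).1 hlim] with ω hω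
  refine nonpos_iff_eq_zero.1 (le_trans ?_ hω.le)
  refine liminf_le_liminf (Eventually.of_forall fun k => ENNReal.tsum_le_tsum fun i => ?_)
  exact indicator_le_indicator_of_subset (subset_toMeasurable μ (B k i)) (fun _ => zero_le) ω

theorem hausdorffMeasure_inter_le_liminf_tsum_indicator (s : ℝ) {A S : Set X} {r : ℕ → ℝ≥0∞}
    (hr : Tendsto r atTop (𝓝 0)) {t : ℕ → ℕ → Set X} (htr : ∀ k i, ediam (t k i) ≤ r k)
    (hAt : ∀ k, A ⊆ ⋃ i, t k i) :
    μH[s] (A ∩ S) ≤ liminf (fun k => ∑' i,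
      {i | (t k i ∩ S).Nonempty}.indicator (fun i => ediam (t k i) ^ s) i) atTop := by
  simp only [← tsum_subtype]
  refine Measure.hausdorffMeasure_le_liminf_tsum s (A ∩ S) r hr
    (fun k (i : {i | (t k i ∩ S).Nonempty}) => t k i)
    (Eventually.of_forall fun k i => htr k i) (Eventually.of_forall fun k y hy => ?_)
  obtain ⟨i, hi⟩ := mem_iUnion.1 (hAt k hy.1)
  exact mem_iUnion.2 ⟨⟨i, y, hi, hy.2⟩, hi⟩

theorem ae_hausdorffMeasure_inter_eq_zero {S : Ω → Set X} {A : Set X} {C : ℝ≥0∞} {s d : ℝ}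
    (hC : C ≠ ∞) (hs : 0 ≤ s) (hd : 0 < d)
    (hμ : ∀ t ⊆ A, ediam t ≠ ∞ → μ {ω | (t ∩ S ω).Nonempty} ≤ C * ediam t ^ d)
    (hA : μH[s + d] A = 0) :
    ∀ᵐ ω ∂μ, μH[s] (A ∩ S ω) = 0 := by
  obtain ⟨r, -, hr, hrlim⟩ := exists_seq_strictAnti_tendsto' (zero_lt_one (α := ℝ≥0∞))
  choose t htA hAt htr hsum using fun k =>
    exists_cover_tsum_ediam_rpow_le_of_hausdorffMeasure_eq_zero (by positivity) hA (hr k).1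
  have htop (k i) : ediam (t k i) ≠ ∞ := ne_top_of_lt ((htr k i).trans_lt (hr k).2)
  have hterm (k i) : ediam (t k i) ^ s * μ {ω | (t k i ∩ S ω).Nonempty} ≤
      C * ediam (t k i) ^ (s + d) := by
    rw [ENNReal.rpow_add_of_nonneg _ _ hs hd.le, mul_left_comm]
    gcongr
    exact hμ _ (htA k i) (htop k i)
  have htotal (k) : ∑' i, ediam (t k i) ^ s * μ {ω | (t k i ∩ S ω).Nonempty} ≤ C * r k :=
    calc _ ≤ ∑' i, C * ediam (t k i) ^ (s + d) := ENNReal.tsum_le_tsum (hterm k)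
      _ = C * ∑' i, ediam (t k i) ^ (s + d) := ENNReal.tsum_mul_left
      _ ≤ C * r k := by gcongr; exact hsum k
  have hlim : Tendsto (fun k => C * r k) atTop (𝓝 0) := by
    simpa using ENNReal.Tendsto.const_mul hrlim (Or.inr hC)
  filter_upwards [ae_liminf_tsum_indicator_eq_zero
    (tendsto_of_tendsto_of_tendsto_of_le_of_le tendsto_const_nhds hlim
      (fun _ => zero_le) htotal)] with ω hω
  exact nonpos_iff_eq_zero.1
    ((hausdorffMeasure_inter_le_liminf_tsum_indicator s hrlim htr hAt).trans_eq hω)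

theorem ae_hausdorffMeasure_inter_preimage_singleton_eq_zero {f : X → ℝ} {K : ℝ≥0} {A : Set X}
    (hf : LipschitzOnWith K f A) {s : ℝ} (hs : 0 ≤ s) (hA : μH[s + 1] A = 0) :
    ∀ᵐ c : ℝ, μH[s] (A ∩ f ⁻¹' {c}) = 0 := by
  refine ae_hausdorffMeasure_inter_eq_zero (C := K) ENNReal.coe_ne_top hs one_pos
    (fun t htA _ => ?_) hA
  calc volume {c | (t ∩ f ⁻¹' {c}).Nonempty} = volume (f '' t) := rfl
    _ ≤ ediam (f '' t) := Real.volume_le_diam _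
    _ ≤ K * ediam t ^ (1 : ℝ) := by
      rw [ENNReal.rpow_one]
      exact ediam_image_le_iff.2 fun y hy z hz =>
        (hf.mono htA).edist_le_mul_of_le hy hz (edist_le_ediam_of_mem hy hz)

end NullSections

theorem hausdorffMeasure_inter_sphere_eq_zero_of_forall_smul_mem {E : Type*}
    [NormedAddCommGroup E] [NormedSpace ℝ E] [FiniteDimensional ℝ E] [MeasurableSpace E]
    [BorelSpace E] {μ : Measure E} [μ.IsAddHaarMeasure] {G : Set E}
    (hcone : ∀ c : ℝ, 0 < c → ∀ w ∈ G, c • w ∈ G) (hG : μ G = 0) :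
    μH[(finrank ℝ E : ℝ) - 1] (G ∩ sphere 0 1) = 0 := by
  rcases subsingleton_or_nontrivial E with _ | _
  · simp [sphere_eq_empty_of_subsingleton]
  have hdim : (0 : ℝ) ≤ finrank ℝ E - 1 := sub_nonneg.2 (Nat.one_le_cast.2 finrank_pos)
  have hG' : μH[(finrank ℝ E : ℝ) - 1 + 1] G = 0 := by
    rw [sub_add_cancel]
    exact Measure.absolutelyContinuous_isAddHaarMeasure _ μ hG
  obtain ⟨c, (hc : 0 < c), hnull⟩ : ∃ c ∈ Ioi (0 : ℝ),
      μH[(finrank ℝ E : ℝ) - 1] (G ∩ norm ⁻¹' {c}) = 0 :=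
    Measure.exists_mem_of_measure_ne_zero_of_ae (by simp) <| ae_restrict_of_ae <|
      ae_hausdorffMeasure_inter_preimage_singleton_eq_zero
        lipschitzWith_one_norm.lipschitzOnWith hdim hG'
  have hscale : G ∩ sphere 0 1 ⊆ c⁻¹ • (G ∩ norm ⁻¹' {c}) := by
    rintro e ⟨heG, he⟩
    rw [mem_inv_smul_set_iff₀ hc.ne']
    refine ⟨hcone c hc e heG, ?_⟩
    rw [mem_sphere_zero_iff_norm] at he
    simp [norm_smul, he, hc.le]
  refine measure_mono_null hscale ?_
  rw [Measure.hausdorffMeasure_smul₀ hdim (inv_ne_zero hc.ne'), hnull, smul_zero]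

section Hyperplanes

variable {E : Type*} [NormedAddCommGroup E] [InnerProductSpace ℝ E] [FiniteDimensional ℝ E]
  [MeasurableSpace E] [BorelSpace E]

theorem volume_setOf_forall_abs_inner_le {ι : Type*} [Fintype ι] (b : OrthonormalBasis ι ℝ E)
    (r : ι → ℝ) :
    volume {w : E | ∀ i, |⟪b i, w⟫| ≤ r i} = ∏ i, ENNReal.ofReal (2 * r i) := by
  have hmp := (PiLp.volume_preserving_ofLp ι).comp b.measurePreserving_repr
  have hbox : {w : E | ∀ i, |⟪b i, w⟫| ≤ r i} =
      (WithLp.ofLp ∘ b.repr) ⁻¹' Icc (-r) r := by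
    ext w
    simp [Pi.le_def, abs_le, forall_and, b.repr_apply_apply]
  rw [hbox, hmp.measure_preimage measurableSet_Icc.nullMeasurableSet, Real.volume_Icc_pi]
  simp [two_mul]

theorem volume_setOf_abs_inner_le_inter_closedBall_le {v : E} (hv : v ≠ 0) (a R : ℝ) :
    volume ({w : E | |⟪v, w⟫| ≤ a} ∩ closedBall 0 R) ≤
      ENNReal.ofReal (2 * (a / ‖v‖)) * ENNReal.ofReal (2 * R) ^ (finrank ℝ E - 1) := by
  classical
  have hv' : 0 < ‖v‖ := norm_pos_iff.2 hv
  have hunit : Orthonormal ℝ ((↑) : ({‖v‖⁻¹ • v} : Set E) → E) := by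
    simp [orthonormal_subsingleton_iff, norm_smul, hv]
  obtain ⟨u, b, hu, hb⟩ := hunit.exists_orthonormalBasis_extension
  let i₀ : u := ⟨‖v‖⁻¹ • v, hu rfl⟩
  have hbox : {w : E | |⟪v, w⟫| ≤ a} ∩ closedBall 0 R ⊆
      {w | ∀ i, |⟪b i, w⟫| ≤ Function.update (fun _ => R) i₀ (a / ‖v‖) i} := by
    rintro w ⟨hwa, hwR⟩ i
    rcases eq_or_ne i i₀ with rfl | hi
    · rw [Function.update_self, hb, real_inner_smul_left, abs_mul, abs_inv, abs_norm,
        inv_mul_eq_div]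
      exact div_le_div_of_nonneg_right hwa hv'.le
    · rw [Function.update_of_ne hi]
      calc |⟪b i, w⟫| ≤ ‖b i‖ * ‖w‖ := abs_real_inner_le_norm _ _
        _ ≤ R := by simpa using hwR
  have hprod : ∏ i ∈ Finset.univ.erase i₀,
      ENNReal.ofReal (2 * Function.update (fun _ => R) i₀ (a / ‖v‖) i) =
        ENNReal.ofReal (2 * R) ^ (finrank ℝ E - 1) := by
    rw [Finset.prod_eq_pow_card fun i hi => by
        rw [Function.update_of_ne (Finset.ne_of_mem_erase hi)],
      Finset.card_erase_of_mem (Finset.mem_univ _), Finset.card_univ,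
      finrank_eq_card_basis b.toBasis]
  refine (measure_mono hbox).trans_eq ?_
  rw [volume_setOf_forall_abs_inner_le, ← Finset.mul_prod_erase _ _ (Finset.mem_univ i₀),
    Function.update_self, hprod]

theorem volume_setOf_inter_hyperplane_nonempty_le (x : E) {δ R : ℝ} (hδ : 0 < δ) (hR : 0 ≤ R)
    {t : Set E} (ht : ∀ y ∈ t, δ ≤ ‖y - x‖) (hdiam : ediam t ≠ ∞) :
    volume ({w : E | (t ∩ {y | ⟪y - x, w⟫ = 0}).Nonempty} ∩ closedBall 0 R) ≤
      ENNReal.ofReal (2 * (R / δ)) * ENNReal.ofReal (2 * R) ^ (finrank ℝ E - 1) * ediam t := by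
  rcases t.eq_empty_or_nonempty with rfl | ⟨z, hz⟩
  · simp
  have hslab : {w : E | (t ∩ {y | ⟪y - x, w⟫ = 0}).Nonempty} ∩ closedBall 0 R ⊆
      {w | |⟪z - x, w⟫| ≤ diam t * R} ∩ closedBall 0 R := by
    rintro w ⟨⟨y, hy, hyw⟩, hw⟩
    refine ⟨?_, hw⟩
    calc |⟪z - x, w⟫| = |⟪z - y, w⟫| := by
          rw [← sub_add_sub_cancel z y x, inner_add_left, hyw, add_zero]
      _ ≤ ‖z - y‖ * ‖w‖ := abs_real_inner_le_norm _ _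
      _ ≤ diam t * R := by
          gcongr
          · exact (dist_eq_norm z y).symm.trans_le (dist_le_diam_of_mem' hdiam hz hy)
          · exact mem_closedBall_zero_iff.1 hw
  have hzx : 0 < ‖z - x‖ := hδ.trans_le (ht z hz)
  have hwidth : 2 * (diam t * R / ‖z - x‖) ≤ 2 * (R / δ) * diam t :=
    calc 2 * (diam t * R / ‖z - x‖) ≤ 2 * (diam t * R / δ) := by gcongr; exact ht z hz
      _ = 2 * (R / δ) * diam t := by ring
  calc _ ≤ ENNReal.ofReal (2 * (diam t * R / ‖z - x‖)) *
          ENNReal.ofReal (2 * R) ^ (finrank ℝ E - 1) :=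
        (measure_mono hslab).trans
          (volume_setOf_abs_inner_le_inter_closedBall_le (norm_pos_iff.1 hzx) _ _)
    _ ≤ ENNReal.ofReal (2 * (R / δ) * diam t) * ENNReal.ofReal (2 * R) ^ (finrank ℝ E - 1) := by
        gcongr
    _ = _ := by
        rw [ENNReal.ofReal_mul (by positivity), diam, ENNReal.ofReal_toReal hdiam, mul_right_comm]

theorem ae_hausdorffMeasure_inter_hyperplane_eq_zero_of_le_norm_sub (x : E) {δ s : ℝ} (hδ : 0 < δ)
    (hs : 0 ≤ s) {A : Set E} (hAδ : ∀ y ∈ A, δ ≤ ‖y - x‖) (hA : μH[s + 1] A = 0) :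
    ∀ᵐ w : E, μH[s] (A ∩ {y | ⟪y - x, w⟫ = 0}) = 0 := by
  rw [← Measure.restrict_univ (μ := volume), ← iUnion_closedBall_nat (0 : E),
    ae_restrict_iUnion_iff]
  intro R
  refine ae_hausdorffMeasure_inter_eq_zero
    (C := ENNReal.ofReal (2 * (R / δ)) * ENNReal.ofReal (2 * R) ^ (finrank ℝ E - 1))
    (by finiteness) hs one_pos (fun t htA hdiam => ?_) hA
  rw [Measure.restrict_apply₀' measurableSet_closedBall.nullMeasurableSet, ENNReal.rpow_one]
  exact volume_setOf_inter_hyperplane_nonempty_le x hδ R.cast_nonneg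
    (fun y hy => hAδ y (htA hy)) hdiam

theorem ae_hausdorffMeasure_inter_hyperplane_eq_zero (x : E) {s : ℝ} (hs : 0 < s) {A : Set E}
    (hA : μH[s + 1] A = 0) :
    ∀ᵐ w : E, μH[s] (A ∩ {y | ⟪y - x, w⟫ = 0}) = 0 := by
  let far (k : ℕ) : Set E := A ∩ {y | 1 / ((k : ℝ) + 1) ≤ ‖y - x‖}
  have hcover : A ⊆ {x} ∪ ⋃ k, far k := by
    intro y hy
    rcases eq_or_ne y x with rfl | hyx
    · exact Or.inl rfl
    · obtain ⟨k, hk⟩ := exists_nat_one_div_lt (norm_pos_iff.2 (sub_ne_zero.2 hyx))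
      exact Or.inr (mem_iUnion.2 ⟨k, hy, hk.le⟩)
  have hfar : ∀ᵐ w : E, ∀ k, μH[s] (far k ∩ {y | ⟪y - x, w⟫ = 0}) = 0 :=
    ae_all_iff.2 fun k => ae_hausdorffMeasure_inter_hyperplane_eq_zero_of_le_norm_sub x
      (by positivity) hs.le (fun y hy => hy.2) (measure_mono_null inter_subset_left hA)
  have := Measure.nullSingletonClass_hausdorff E hs
  filter_upwards [hfar] with w hw
  refine measure_mono_null (inter_subset_inter_left _ hcover) ?_
  rw [union_inter_distrib_right, iUnion_inter]
  exact measure_union_null (measure_mono_null inter_subset_left (measure_singleton x))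
    (measure_iUnion_null hw)

theorem ae_dimH_inter_hyperplane_le (A : Set E) (x : E) :
    ∀ᵐ w : E, dimH (A ∩ {y | ⟪y - x, w⟫ = 0}) ≤ dimH A - 1 := by
  -- Passing to the essential supremum lets the exceptional null set depend on the threshold `c`.
  suffices h : essSup (fun w : E => dimH (A ∩ {y | ⟪y - x, w⟫ = 0})) volume ≤ dimH A - 1 by
    filter_upwards [ENNReal.ae_le_essSup fun w : E => dimH (A ∩ {y | ⟪y - x, w⟫ = 0})]
      with w hw using hw.trans h
  refine le_of_forall_gt_imp_ge_of_dense fun c hc => ?_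
  induction c with
  | top => exact le_top
  | coe c =>
    have hc0 : 0 < c := ENNReal.coe_pos.1 (pos_of_gt hc)
    have hAc : dimH A < (c + 1 : ℝ≥0) := by
      simpa using ENNReal.lt_add_of_sub_lt_right (Or.inr ENNReal.one_ne_top) hc
    have hnull : μH[(c : ℝ) + 1] A = 0 := by
      simpa using hausdorffMeasure_of_dimH_lt hAc
    refine essSup_le_of_ae_le _ ?_
    filter_upwards [ae_hausdorffMeasure_inter_hyperplane_eq_zero x (NNReal.coe_pos.2 hc0) hnull]
      with w hw
    exact dimH_le_of_hausdorffMeasure_ne_top (hw.trans_ne ENNReal.zero_ne_top)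

/-- As subtraction in `ℝ≥0∞` is truncated, for `dimH A < 1` this says that almost every section
has dimension zero. -/
theorem stmt_12_general (A : Set E) (x : E) :
    ∀ᵐ e ∂(μH[(finrank ℝ E : ℝ) - 1].restrict (sphere (0 : E) 1)),
      dimH (A ∩ {y | ⟪y - x, e⟫ = 0}) ≤ dimH A - 1 := by
  rw [ae_iff, Measure.restrict_apply₀' isClosed_sphere.measurableSet.nullMeasurableSet]
  refine hausdorffMeasure_inter_sphere_eq_zero_of_forall_smul_mem (fun c hc w hw => ?_)
    (ae_iff.1 (ae_dimH_inter_hyperplane_le A x))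
  simpa [real_inner_smul_right, hc.ne'] using hw

end Hyperplanes

theorem stmt_12 (n : ℕ) (hn : 2 ≤ n)
    (A : Set (EuclideanSpace ℝ (Fin n))) (hA : MeasurableSet A)
    (hdA : 1 < dimH A) (x : EuclideanSpace ℝ (Fin n)) :
    ∀ᵐ e ∂(μH[(n : ℝ) - 1].restrict (sphere (0 : EuclideanSpace ℝ (Fin n)) 1)),
      dimH (A ∩ {y | ⟪y - x, e⟫ = 0}) ≤ dimH A - 1 := by
  simpa using stmt_12_general A x
end
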